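/- Assume condition (C) and (K,c) ∈ D₁ with μ_b(K,c) > μ_f(K,c) (equivalently, by Proposition BMBF, c_*(K) < c < c_M(K), i.e. (K,c) ∈ D_{1,1}). Then there exists a unique real number μ¹_pul = μ¹_pul(K,c), and moreover μ_f(K,c) < μ¹_pul < μ_b(K,c), such that the system (TV) with parameter μ has a solution with u > 0 satisfying condition (HO) with level ū = u₁ if and only if μ = μ¹_pul. -/

import Mathlib

open Set Filter MeasureTheory

noncomputable section

namespace TrafficTW

/-- `f(u) = (K u - V(u) - c)/K`. -/
def fTV (V : ℝ → ℝ) (K c u : ℝ) : ℝ := (K * u - V u - c) / K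

/-- `f'(u) = (K - V'(u))/K`. -/
def fdTV (V' : ℝ → ℝ) (K u : ℝ) : ℝ := (K - V' u) / K

/-- `h(u,μ) = f'(u) + μ`. -/
def hTV (V' : ℝ → ℝ) (K μ u : ℝ) : ℝ := fdTV V' K u + μ

/-- `g₁(u) = 1/(τ κ(1/u))`. -/
def g1TV (κ : ℝ → ℝ) (τ u : ℝ) : ℝ := 1 / (τ * κ (1 / u))

/-- `g₂(u) = u/(2 τ κ(1/u))`. -/
def g2TV (κ : ℝ → ℝ) (τ u : ℝ) : ℝ := u / (2 * τ * κ (1 / u))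

/-- The traveling-wave system (TV): `u' = w`, `w' = g₁ f + g₂ h w`. -/
def IsTVSol (V V' κ : ℝ → ℝ) (τ K c μ : ℝ) (u w : ℝ → ℝ) : Prop :=
  (∀ z, HasDerivAt u (w z) z) ∧
  (∀ z, HasDerivAt w
    (g1TV κ τ (u z) * fTV V K c (u z) + g2TV κ τ (u z) * hTV V' K μ (u z) * w z) z)

/-- Assumption (A1), where `V'` and `V''` are the first and second derivatives of `V`. -/
def A1 (V V' V'' : ℝ → ℝ) (UM : ℝ) : Prop :=
  (∀ u ∈ Ici (0:ℝ), HasDerivWithinAt V (V' u) (Ici 0) u) ∧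
  ContinuousOn V' (Ici 0) ∧
  (∀ u ∈ Ioi (0:ℝ), HasDerivAt V' (V'' u) u) ∧
  ContinuousOn V'' (Ioi 0) ∧
  (∀ u, 0 < u → 0 < V' u) ∧ (∃ M, ∀ u, 0 < u → V' u ≤ M) ∧
  Tendsto V' atTop (nhds 0) ∧
  0 < UM ∧ (∀ u, 0 < u → V' u ≤ V' UM) ∧
  (∀ u, 0 < u → (V'' u = 0 ↔ u = UM))

/-- Assumption (A2). -/
def A2 (κ : ℝ → ℝ) : Prop :=
  ContDiffOn ℝ 1 κ (Ioi 0) ∧ ∀ ρ, 0 < ρ → 0 < κ ρ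

/-- `c₀ = -V(0)`. -/
def c0v (V : ℝ → ℝ) : ℝ := - V 0

/-- `c_M(K) = K u_M(K) - V(u_M(K))`, where `uMx` is the function `K ↦ u_M(K)`. -/
def cMf (V : ℝ → ℝ) (uMx : ℝ → ℝ) (K : ℝ) : ℝ := K * uMx K - V (uMx K)

/-- `c_m(K) = K u_m(K) - V(u_m(K))`, where `umx` is the function `K ↦ u_m(K)`. -/
def cmf (V : ℝ → ℝ) (umx : ℝ → ℝ) (K : ℝ) : ℝ := K * umx K - V (umx K)

/-- `c₁(K) = max (c₀, c_m(K))`. -/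
def c1f (V : ℝ → ℝ) (umx : ℝ → ℝ) (K : ℝ) : ℝ := max (c0v V) (cmf V umx K)

/-- `uMx K = u_M(K)` is the unique local maximum point of `u ↦ K u - V(u)`, characterized
by `u_M(K) ∈ (0, U_M)` and `V'(u_M(K)) = K`, for `K ∈ (K₀, K_M)`. -/
def UMaxHyp (V' : ℝ → ℝ) (UM : ℝ) (uMx : ℝ → ℝ) : Prop :=
  ∀ K, V' 0 < K → K < V' UM → uMx K ∈ Ioo 0 UM ∧ V' (uMx K) = K

/-- `umx K = u_m(K)` is the unique local minimum point of `u ↦ K u - V(u)`, characterized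
by `u_m(K) ∈ (U_M, ∞)` and `V'(u_m(K)) = K`, for `K ∈ (0, K_M)`. -/
def UMinHyp (V' : ℝ → ℝ) (UM : ℝ) (umx : ℝ → ℝ) : Prop :=
  ∀ K, 0 < K → K < V' UM → UM < umx K ∧ V' (umx K) = K

/-- Characterization of `K₁ ∈ (K₀, K_M)`: `c_m(K) < c₀` for `K < K₁` and `c_m(K) > c₀`
for `K > K₁`. -/
def K1Hyp (V V' : ℝ → ℝ) (UM : ℝ) (umx : ℝ → ℝ) (K₁ : ℝ) : Prop :=
  V' 0 < K₁ ∧ K₁ < V' UM ∧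
  (∀ K, 0 < K → K < K₁ → cmf V umx K < c0v V) ∧
  cmf V umx K₁ = c0v V ∧
  (∀ K, K₁ < K → K < V' UM → c0v V < cmf V umx K)

/-- The parameter region `D₁`. -/
def D1 (V V' : ℝ → ℝ) (UM : ℝ) (uMx umx : ℝ → ℝ) : Set (ℝ × ℝ) :=
  {p | V' 0 < p.1 ∧ p.1 < V' UM ∧ c1f V umx p.1 < p.2 ∧ p.2 < cMf V uMx p.1}

/-- The parameter region `D₂`. -/
def D2 (V V' : ℝ → ℝ) (umx : ℝ → ℝ) (K₁ : ℝ) : Set (ℝ × ℝ) :=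
  {p | (V' 0 < p.1 ∧ p.1 < K₁ ∧ p.2 = c0v V) ∨
       (0 < p.1 ∧ p.1 < K₁ ∧ cmf V umx p.1 < p.2 ∧ p.2 < c0v V)}

/-- For `(K,c) ∈ D₁`: `u₁ < u₀ < u₂` are the exactly three positive zeros of `f`. -/
def ZerosD1 (V : ℝ → ℝ) (K c u1 u0 u2 : ℝ) : Prop :=
  0 < u1 ∧ u1 < u0 ∧ u0 < u2 ∧
  fTV V K c u1 = 0 ∧ fTV V K c u0 = 0 ∧ fTV V K c u2 = 0 ∧
  ∀ u, 0 < u → fTV V K c u = 0 → u = u1 ∨ u = u0 ∨ u = u2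

/-- For `(K,c) ∈ D₂`: `u₀ < u₂` are the exactly two positive zeros of `f`. -/
def ZerosD2 (V : ℝ → ℝ) (K c u0 u2 : ℝ) : Prop :=
  0 < u0 ∧ u0 < u2 ∧ fTV V K c u0 = 0 ∧ fTV V K c u2 = 0 ∧
  ∀ u, 0 < u → fTV V K c u = 0 → u = u0 ∨ u = u2

/-- Condition (HE1). -/
def HE1 (u1 u2 : ℝ) (u w : ℝ → ℝ) : Prop :=
  Tendsto u atBot (nhds u1) ∧ Tendsto u atTop (nhds u2) ∧
  Tendsto w atBot (nhds 0) ∧ Tendsto w atTop (nhds 0) ∧ ∀ z, 0 < w z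

/-- Condition (HE2). -/
def HE2 (u1 u2 : ℝ) (u w : ℝ → ℝ) : Prop :=
  Tendsto u atBot (nhds u2) ∧ Tendsto u atTop (nhds u1) ∧
  Tendsto w atBot (nhds 0) ∧ Tendsto w atTop (nhds 0) ∧ ∀ z, w z < 0

/-- Condition (HO) with level `ub`. -/
def HO (ub : ℝ) (u w : ℝ → ℝ) : Prop :=
  Tendsto u atBot (nhds ub) ∧ Tendsto u atTop (nhds ub) ∧
  Tendsto w atBot (nhds 0) ∧ Tendsto w atTop (nhds 0) ∧
  ¬ (∀ z, u z = ub ∧ w z = 0)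

/-- (TV) with parameter `μ` has a positive solution satisfying (HE1). -/
def HasHE1 (V V' κ : ℝ → ℝ) (τ K c μ u1 u2 : ℝ) : Prop :=
  ∃ u w : ℝ → ℝ, IsTVSol V V' κ τ K c μ u w ∧ (∀ z, 0 < u z) ∧ HE1 u1 u2 u w

/-- (TV) with parameter `μ` has a positive solution satisfying (HE2). -/
def HasHE2 (V V' κ : ℝ → ℝ) (τ K c μ u1 u2 : ℝ) : Prop :=
  ∃ u w : ℝ → ℝ, IsTVSol V V' κ τ K c μ u w ∧ (∀ z, 0 < u z) ∧ HE2 u1 u2 u w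

/-- (TV) with parameter `μ` has a positive solution satisfying (HO) with level `ub`. -/
def HasHO (V V' κ : ℝ → ℝ) (τ K c μ ub : ℝ) : Prop :=
  ∃ u w : ℝ → ℝ, IsTVSol V V' κ τ K c μ u w ∧ (∀ z, 0 < u z) ∧ HO ub u w

/-- Condition (H): `∫₁^∞ dρ/(ρ³ κ(ρ)) = ∞`. -/
def CondH (κ : ℝ → ℝ) : Prop :=
  ¬ IntegrableOn (fun ρ => 1 / (ρ ^ 3 * κ ρ)) (Ioi 1)

/-- Condition (C). -/
def CondC (V' κ : ℝ → ℝ) (UM K₁ K : ℝ) : Prop :=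
  (K₁ < K ∧ K < V' UM) ∨ (CondH κ ∧ V' 0 < K ∧ K ≤ K₁)

/-- Periodic solution. -/
def IsPeriodicSol (u w : ℝ → ℝ) : Prop :=
  ∃ Z, 0 < Z ∧ ∀ z, u (z + Z) = u z ∧ w (z + Z) = w z

/-- Nonconstant pair of functions. -/
def Nonconst (u w : ℝ → ℝ) : Prop := ∃ z, u z ≠ u 0 ∨ w z ≠ w 0

/-- Discriminant of the Jacobian at an equilibrium `(u,0)`. -/
def discTV (V' κ : ℝ → ℝ) (τ K u μ : ℝ) : ℝ :=
  (g2TV κ τ u) ^ 2 * (hTV V' K μ u) ^ 2 + 4 * g1TV κ τ u * fdTV V' K u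

/-- The eigenvalue `λ₊(u)`. -/
def lamP (V' κ : ℝ → ℝ) (τ K u μ : ℝ) : ℝ :=
  (g2TV κ τ u * hTV V' K μ u + Real.sqrt (discTV V' κ τ K u μ)) / 2

/-- The eigenvalue `λ₋(u)`. -/
def lamM (V' κ : ℝ → ℝ) (τ K u μ : ℝ) : ℝ :=
  (g2TV κ τ u * hTV V' K μ u - Real.sqrt (discTV V' κ τ K u μ)) / 2

/-- `Z` is the minimal period of `(u,w)`. -/
def IsMinPeriod (u w : ℝ → ℝ) (Z : ℝ) : Prop :=
  0 < Z ∧ (∀ z, u (z + Z) = u z ∧ w (z + Z) = w z) ∧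
  ∀ Z', 0 < Z' → (∀ z, u (z + Z') = u z ∧ w (z + Z') = w z) → Z ≤ Z'

open scoped Topology NNReal

open scoped Topology

/-- Graph of a trajectory: `q' = A/q + D` on `(a,b)`, `q > 0`. -/
def Gr (A D : ℝ → ℝ) (a b : ℝ) (q : ℝ → ℝ) : Prop :=
  ContinuousOn q (Icc a b) ∧ (∀ u ∈ Ioo a b, 0 < q u) ∧
    ∀ u ∈ Ioo a b, HasDerivAt q (A u / q u + D u) u

lemma nonpos_of {r r' : ℝ → ℝ} {a b : ℝ} (hc : ContinuousOn r (Icc a b))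
    (hd : ∀ u ∈ Ioo a b, HasDerivAt r (r' u) u) (ha : r a ≤ 0)
    (h : ∀ u ∈ Ioo a b, 0 < r u → r' u ≤ 0) : ∀ u ∈ Icc a b, r u ≤ 0 := by
  intro t ht
  by_contra hpos
  push Not at hpos
  have hcl : IsClosed (Icc a t ∩ r ⁻¹' Iic 0) :=
    (hc.mono (Icc_subset_Icc_right ht.2)).preimage_isClosed_of_isClosed isClosed_Icc isClosed_Iic
  have hcomp : IsCompact (Icc a t ∩ r ⁻¹' Iic 0) :=
    isCompact_Icc.of_isClosed_subset hcl inter_subset_left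
  obtain ⟨s, hs, hs2⟩ := hcomp.exists_isGreatest ⟨a, ⟨⟨le_rfl, ht.1⟩, ha⟩⟩
  have hst : s ≤ t := hs.1.2
  have hpos' : ∀ x ∈ Ioc s t, 0 < r x := by
    intro x hx
    by_contra hcon
    push Not at hcon
    have := hs2 ⟨⟨hs.1.1.trans hx.1.le, hx.2⟩, hcon⟩
    exact absurd hx.1 (not_lt.mpr this)
  have hsub : ∀ x ∈ Ioo s t, x ∈ Ioo a b := fun x hx =>
    ⟨lt_of_le_of_lt hs.1.1 hx.1, lt_of_lt_of_le hx.2 ht.2⟩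
  have hanti : AntitoneOn r (Icc s t) := by
    refine antitoneOn_of_deriv_nonpos (convex_Icc s t) (hc.mono (Icc_subset_Icc hs.1.1 ht.2)) ?_ ?_
    · rw [interior_Icc]
      exact fun x hx => (hd x (hsub x hx)).differentiableAt.differentiableWithinAt
    · rw [interior_Icc]
      intro x hx
      rw [(hd x (hsub x hx)).deriv]
      exact h x (hsub x hx) (hpos' x ⟨hx.1, hx.2.le⟩)
  have h1 := hanti ⟨le_rfl, hst⟩ ⟨hst, le_rfl⟩ hst
  have h2 : r s ≤ 0 := hs.2
  linarith

lemma Gr.le {A D1 D2 q1 q2 : ℝ → ℝ} {a b σ ρ : ℝ} (h1 : Gr A D1 a b q1) (h2 : Gr A D2 a b q2)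
    (hA : ∀ u ∈ Ioo a b, 0 ≤ A u) (hσ : 0 ≤ σ) (hρ : 0 ≤ ρ)
    (hD : ∀ u ∈ Ioo a b, D2 u - D1 u ≤ σ) (ha : q2 a ≤ q1 a + ρ) :
    ∀ u ∈ Icc a b, q2 u ≤ q1 u + ρ + σ * (u - a) := by
  have key := nonpos_of (r := fun u => q2 u - q1 u - ρ - σ * (u - a))
    (r' := fun u => (A u / q2 u + D2 u) - (A u / q1 u + D1 u) - σ) (a := a) (b := b) ?_ ?_ ?_ ?_
  · intro u hu
    have := key u hu
    linarith
  · exact ((h2.1.sub h1.1).sub continuousOn_const).sub (by fun_prop)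
  · intro u hu
    have e := (((h2.2.2 u hu).sub (h1.2.2 u hu)).sub_const ρ).sub
      (((hasDerivAt_id u).sub_const a).const_mul σ)
    exact e.congr_deriv (by ring)
  · simp; linarith
  · intro u hu hr
    have p1 := h1.2.1 u hu
    have p2 := h2.2.1 u hu
    have hq : q1 u ≤ q2 u := by
      have := mul_nonneg hσ (sub_nonneg.mpr hu.1.le)
      linarith
    have := div_le_div_of_nonneg_left (hA u hu) p1 hq
    have := hD u hu
    linarith

lemma Gr.nonneg {A D q : ℝ → ℝ} {a b : ℝ} (h : Gr A D a b q) (hab : a < b) :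
    ∀ u ∈ Icc a b, 0 ≤ q u := by
  have hcl : IsClosed (Icc a b ∩ q ⁻¹' Ici 0) :=
    h.1.preimage_isClosed_of_isClosed isClosed_Icc isClosed_Ici
  have : Ioo a b ⊆ Icc a b ∩ q ⁻¹' Ici 0 := fun x hx =>
    ⟨Ioo_subset_Icc_self hx, (h.2.1 x hx).le⟩
  have h2 := hcl.closure_subset_iff.mpr this
  rw [closure_Ioo hab.ne] at h2
  exact fun u hu => (h2 hu).2

lemma Gr.reflect {A D q : ℝ → ℝ} {a b : ℝ} (h : Gr A D a b q) :
    Gr (fun v => -A (-v)) (fun v => -D (-v)) (-b) (-a) (fun v => q (-v)) := by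
  have hm : ∀ v ∈ Ioo (-b) (-a), -v ∈ Ioo a b := fun v hv =>
    ⟨by linarith [hv.2], by linarith [hv.1]⟩
  refine ⟨?_, fun v hv => h.2.1 _ (hm v hv), fun v hv => ?_⟩
  · refine h.1.comp continuous_neg.continuousOn ?_
    intro v hv
    exact ⟨by linarith [hv.2], by linarith [hv.1]⟩
  · have e := (h.2.2 _ (hm v hv)).scomp v (hasDerivAt_neg v)
    exact e.congr_deriv (by simp only [smul_eq_mul]; ring)

lemma Gr.congr {A D A' D' q : ℝ → ℝ} {a b : ℝ} (h : Gr A D a b q)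
    (hA : ∀ u ∈ Ioo a b, A u = A' u) (hD : ∀ u ∈ Ioo a b, D u = D' u) : Gr A' D' a b q := by
  refine ⟨h.1, h.2.1, fun u hu => ?_⟩
  rw [← hA u hu, ← hD u hu]
  exact h.2.2 u hu

lemma Gr.mono {A D q : ℝ → ℝ} {a b a' b' : ℝ} (h : Gr A D a b q) (ha : a ≤ a') (hb : b' ≤ b) :
    Gr A D a' b' q :=
  ⟨h.1.mono (Icc_subset_Icc ha hb), fun u hu => h.2.1 u ⟨ha.trans_lt hu.1, hu.2.trans_le hb⟩,
    fun u hu => h.2.2 u ⟨ha.trans_lt hu.1, hu.2.trans_le hb⟩⟩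

lemma Gr.unreflect {A D q : ℝ → ℝ} {a b : ℝ}
    (h : Gr (fun v => -A (-v)) (fun v => -D (-v)) (-b) (-a) q) :
    Gr A D a b (fun v => q (-v)) := by
  have := h.reflect
  simpa using this

/-- gluing at an interior point -/
lemma Gr.glue {A D q1 q2 : ℝ → ℝ} {a c b : ℝ} (hac : a < c) (hcb : c < b)
    (h1 : Gr A D a c q1) (h2 : Gr A D c b q2)
    (hA : ContinuousAt A c) (hD : ContinuousAt D c) (he : q1 c = q2 c) (hp : 0 < q1 c) :
    Gr A D a b (fun u => if u ≤ c then q1 u else q2 u) := by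
  set q : ℝ → ℝ := fun u => if u ≤ c then q1 u else q2 u with hq
  have e1 : ∀ u, u ≤ c → q u = q1 u := fun u hu => by simp [hq, hu]
  have e2 : ∀ u, c ≤ u → q u = q2 u := fun u hu => by
    rcases hu.eq_or_lt with rfl | hu
    · simp [hq, he]
    · simp [hq, not_le.mpr hu]
  have c1 : ContinuousOn q (Icc a c) := h1.1.congr fun u hu => e1 u hu.2
  have c2 : ContinuousOn q (Icc c b) := h2.1.congr fun u hu => e2 u hu.1
  have hcont : ContinuousOn q (Icc a b) := by
    rw [← Icc_union_Icc_eq_Icc hac.le hcb.le]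
    exact c1.union_of_isClosed c2 isClosed_Icc isClosed_Icc
  have hpos : ∀ u ∈ Ioo a b, 0 < q u := by
    intro u hu
    rcases lt_trichotomy u c with h | h | h
    · rw [e1 u h.le]; exact h1.2.1 u ⟨hu.1, h⟩
    · rw [e1 u h.le, h]; exact hp
    · rw [e2 u h.le]; exact h2.2.1 u ⟨h, hu.2⟩
  have hne : ∀ u ∈ Ioo a b, u ≠ c → HasDerivAt q (A u / q u + D u) u := by
    intro u hu hne
    rcases lt_or_gt_of_ne hne with h | h
    · rw [e1 u h.le]
      refine (h1.2.2 u ⟨hu.1, h⟩).congr_of_eventuallyEq ?_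
      filter_upwards [Iio_mem_nhds h] with x hx using e1 x (le_of_lt hx)
    · rw [e2 u h.le]
      refine (h2.2.2 u ⟨h, hu.2⟩).congr_of_eventuallyEq ?_
      filter_upwards [Ioi_mem_nhds h] with x hx using e2 x (le_of_lt hx)
  refine ⟨hcont, hpos, fun u hu => ?_⟩
  by_cases huc : u = c
  · subst huc
    have hcq : ContinuousAt q u := hcont.continuousAt (Icc_mem_nhds hu.1 hu.2)
    have hlim : ContinuousAt (fun x => A x / q x + D x) u :=
      (hA.div hcq (hpos u hu).ne').add hD
    have L : HasDerivWithinAt q (A u / q u + D u) (Iic u) u := by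
      refine hasDerivWithinAt_Iic_of_tendsto_deriv (s := Ioo a u) ?_ hcq.continuousWithinAt
        (Ioo_mem_nhdsLT hac) ?_
      · exact fun x hx => (hne x ⟨hx.1, hx.2.trans hcb⟩ hx.2.ne).differentiableAt.differentiableWithinAt
      · refine (hlim.tendsto.mono_left nhdsWithin_le_nhds).congr' ?_
        filter_upwards [Ioo_mem_nhdsLT hac] with x hx
        exact (hne x ⟨hx.1, hx.2.trans hcb⟩ hx.2.ne).deriv.symm
    have R : HasDerivWithinAt q (A u / q u + D u) (Ici u) u := by
      refine hasDerivWithinAt_Ici_of_tendsto_deriv (s := Ioo u b) ?_ hcq.continuousWithinAt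
        (Ioo_mem_nhdsGT hcb) ?_
      · exact fun x hx => (hne x ⟨hac.trans hx.1, hx.2⟩ hx.1.ne').differentiableAt.differentiableWithinAt
      · refine (hlim.tendsto.mono_left nhdsWithin_le_nhds).congr' ?_
        filter_upwards [Ioo_mem_nhdsGT hcb] with x hx
        exact (hne x ⟨hac.trans hx.1, hx.2⟩ hx.1.ne').deriv.symm
    have := L.union R
    rw [Iic_union_Ici] at this
    exact hasDerivWithinAt_univ.mp this
  · exact hne u hu huc

open scoped Topology

lemma reg_exists {A D : ℝ → ℝ} {a b C CA δ : ℝ} (hab : a < b) (hA : ContinuousOn A (Icc a b))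
    (hD : ContinuousOn D (Icc a b)) (hApos : ∀ u ∈ Icc a b, 0 ≤ A u)
    (hCA : ∀ u ∈ Icc a b, A u ≤ CA) (hC : ∀ u ∈ Icc a b, |D u| ≤ C) (hδ : 0 < δ) :
    ∃ q : ℝ → ℝ, q a = δ / (C + 1) ∧ (∀ u ∈ Icc a b, δ / (C + 1) ≤ q u) ∧
      ∀ u ∈ Icc a b, HasDerivWithinAt q ((A u + δ) / q u + D u) (Icc a b) u := by
  have haI : a ∈ Icc a b := ⟨le_rfl, hab.le⟩
  have hC0 : 0 ≤ C := (abs_nonneg _).trans (hC a haI)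
  have hCA0 : 0 ≤ CA := (hApos a haI).trans (hCA a haI)
  set θ := δ / (C + 1) with hθ
  have hθ0 : 0 < θ := by positivity
  have hmaxpos : ∀ x : ℝ, 0 < max x θ := fun x => lt_max_of_lt_right hθ0
  have hpl : IsPicardLindelof (fun t x => (A t + δ) / max x θ + D t) (tmin := a) (tmax := b)
      ⟨a, haI⟩ θ (Real.toNNReal (((CA + δ) / θ + C) * (b - a))) 0
      (Real.toNNReal ((CA + δ) / θ + C)) (Real.toNNReal ((CA + δ) / θ ^ 2)) := by
    refine ⟨?_, ?_, ?_, ?_⟩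
    · intro t ht
      refine LipschitzOnWith.of_dist_le_mul fun x _ y _ => ?_
      rw [Real.coe_toNNReal _ (by positivity), Real.dist_eq, Real.dist_eq]
      have e : (A t + δ) / max x θ + D t - ((A t + δ) / max y θ + D t)
          = (A t + δ) * (max y θ - max x θ) / (max x θ * max y θ) := by
        have := (hmaxpos x).ne'
        have := (hmaxpos y).ne'
        field_simp
        ring
      have hn : 0 ≤ A t + δ := by linarith [hApos t ht]
      rw [e, abs_div, abs_mul, abs_of_nonneg hn,
        abs_of_pos (mul_pos (hmaxpos x) (hmaxpos y)), div_mul_eq_mul_div]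
      have h1 : |max y θ - max x θ| ≤ |x - y| := by
        have := abs_max_sub_max_le_abs y x θ
        rwa [abs_sub_comm y x] at this
      have h2 : θ ^ 2 ≤ max x θ * max y θ := by
        rw [sq]
        exact mul_le_mul (le_max_right _ _) (le_max_right _ _) hθ0.le (hmaxpos x).le
      have h3 : A t + δ ≤ CA + δ := by linarith [hCA t ht]
      gcongr
    · intro x _
      exact ((hA.add continuousOn_const).div_const _).add hD
    · intro t ht x _
      rw [Real.coe_toNNReal _ (by positivity), Real.norm_eq_abs]
      refine (abs_add_le _ _).trans (add_le_add ?_ (hC t ht))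
      have hn : 0 ≤ A t + δ := by linarith [hApos t ht]
      rw [abs_of_nonneg (div_nonneg hn (hmaxpos x).le)]
      have h3 : A t + δ ≤ CA + δ := by linarith [hCA t ht]
      have := le_max_right x θ
      gcongr
    · have hb : 0 ≤ b - a := by linarith
      rw [Real.coe_toNNReal _ (by positivity), Real.coe_toNNReal _ (by positivity)]
      simp [hb]
  obtain ⟨q, hq0, hq⟩ := hpl.exists_eq_forall_mem_Icc_hasDerivWithinAt₀
  have hge : ∀ u ∈ Icc a b, θ ≤ q u := by
    have key := nonpos_of (r := fun u => θ - q u)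
      (r' := fun u => -((A u + δ) / max (q u) θ + D u)) (a := a) (b := b) ?_ ?_ ?_ ?_
    · intro u hu
      have := key u hu
      linarith
    · exact continuousOn_const.sub fun u hu => (hq u hu).continuousWithinAt
    · intro u hu
      exact ((hq u (Ioo_subset_Icc_self hu)).hasDerivAt (Icc_mem_nhds hu.1 hu.2)).const_sub θ
    · simp only at hq0
      simp [hq0]
    · intro u hu hr
      have hm : max (q u) θ = θ := max_eq_right (by linarith)
      rw [hm]
      have huI := Ioo_subset_Icc_self hu
      have h1 : δ / θ ≤ (A u + δ) / θ := by
        have := hApos u huI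
        gcongr; linarith
      have h2 : δ / θ = C + 1 := by rw [hθ]; field_simp
      have := (abs_le.mp (hC u huI)).1
      linarith
  refine ⟨q, hq0, hge, fun u hu => ?_⟩
  have := hq u hu
  rwa [max_eq_left (hge u hu)] at this

lemma gr_exists {A D : ℝ → ℝ} {a b : ℝ} (hab : a < b) (hA : ContinuousOn A (Icc a b))
    (hD : ContinuousOn D (Icc a b)) (hApos : ∀ u ∈ Ioo a b, 0 < A u) :
    ∃ q : ℝ → ℝ, Gr A D a b q ∧ q a = 0 := by
  have hA0 : ∀ u ∈ Icc a b, 0 ≤ A u := by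
    have hcl : IsClosed (Icc a b ∩ A ⁻¹' Ici 0) :=
      hA.preimage_isClosed_of_isClosed isClosed_Icc isClosed_Ici
    have : Ioo a b ⊆ Icc a b ∩ A ⁻¹' Ici 0 := fun x hx =>
      ⟨Ioo_subset_Icc_self hx, (hApos x hx).le⟩
    have h2 := hcl.closure_subset_iff.mpr this
    rw [closure_Ioo hab.ne] at h2
    exact fun u hu => (h2 hu).2
  have haI : a ∈ Icc a b := ⟨le_rfl, hab.le⟩
  obtain ⟨CA, hCA⟩ := isCompact_Icc.exists_bound_of_continuousOn hA
  obtain ⟨C, hC⟩ := isCompact_Icc.exists_bound_of_continuousOn hD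
  simp only [Real.norm_eq_abs] at hCA hC
  have hCA' : ∀ u ∈ Icc a b, A u ≤ CA := fun u hu => (le_abs_self _).trans (hCA u hu)
  have hC0 : 0 ≤ C := (abs_nonneg _).trans (hC a haI)
  have hCA0 : 0 ≤ CA := (abs_nonneg _).trans (hCA a haI)
  have hδ : ∀ n : ℕ, (0:ℝ) < 1 / ((n:ℝ) + 1) := fun n => by positivity
  choose q hqa hqge hqd using fun n : ℕ => reg_exists hab hA hD hA0 hCA' hC (hδ n)
  have hθ : ∀ n : ℕ, 0 < (1 / ((n:ℝ) + 1)) / (C + 1) := fun n => by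
    have := hδ n; positivity
  have hqpos : ∀ n, ∀ u ∈ Icc a b, 0 < q n u := fun n u hu => (hθ n).trans_le (hqge n u hu)
  have hqc : ∀ n, ContinuousOn (q n) (Icc a b) := fun n u hu => (hqd n u hu).continuousWithinAt
  have hqd' : ∀ n, ∀ u ∈ Ioo a b,
      HasDerivAt (q n) ((A u + 1 / ((n:ℝ) + 1)) / q n u + D u) u := fun n u hu =>
    (hqd n u (Ioo_subset_Icc_self hu)).hasDerivAt (Icc_mem_nhds hu.1 hu.2)
  -- monotone in n
  have hmono : ∀ m n : ℕ, m ≤ n → ∀ u ∈ Icc a b, q n u ≤ q m u := by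
    intro m n hmn
    have hle : 1 / ((n:ℝ) + 1) ≤ 1 / ((m:ℝ) + 1) := by
      have : (m:ℝ) ≤ n := by exact_mod_cast hmn
      gcongr
    have key := nonpos_of (r := fun u => q n u - q m u)
      (r' := fun u => ((A u + 1 / ((n:ℝ) + 1)) / q n u + D u)
        - ((A u + 1 / ((m:ℝ) + 1)) / q m u + D u)) (a := a) (b := b)
      ((hqc n).sub (hqc m)) (fun u hu => (hqd' n u hu).sub (hqd' m u hu)) ?_ ?_
    · intro u hu
      have := key u hu
      linarith
    · rw [hqa, hqa]
      have : 1 / ((n:ℝ) + 1) / (C + 1) ≤ 1 / ((m:ℝ) + 1) / (C + 1) := by gcongr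
      linarith
    · intro u hu hr
      have huI := Ioo_subset_Icc_self hu
      have h1 : (A u + 1 / ((n:ℝ) + 1)) / q n u ≤ (A u + 1 / ((m:ℝ) + 1)) / q m u := by
        have hA1 := hA0 u huI
        have hp := hqpos m u huI
        have hp2 := hqpos n u huI
        have := hδ n
        have := hδ m
        have h5 : q m u ≤ q n u := by linarith
        gcongr
      linarith
  obtain ⟨Q, hQ⟩ := isCompact_Icc.exists_bound_of_continuousOn (hqc 0)
  have hqQ : ∀ n, ∀ u ∈ Icc a b, q n u ≤ Q := fun n u hu =>
    (hmono 0 n (Nat.zero_le _) u hu).trans ((le_abs_self _).trans (hQ u hu))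
  have hQ0 : 0 ≤ Q := (hqpos 0 a haI).le.trans (hqQ 0 a haI)
  -- the limit
  set p : ℝ → ℝ := fun u => ⨅ n, q n u with hp
  have hlim : ∀ u ∈ Icc a b, Tendsto (fun n => q n u) atTop (𝓝 (p u)) := by
    intro u hu
    refine tendsto_atTop_ciInf (fun m n hmn => hmono m n hmn u hu) ⟨0, ?_⟩
    rintro _ ⟨n, rfl⟩
    exact (hqpos n u hu).le
  have hp0 : ∀ u ∈ Icc a b, 0 ≤ p u := fun u hu =>
    ge_of_tendsto' (hlim u hu) fun n => (hqpos n u hu).le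
  -- squares
  have hsq : ∀ n, ∀ u ∈ Icc a b, HasDerivWithinAt (fun u => q n u ^ 2)
      (2 * (A u + 1 / ((n:ℝ) + 1) + D u * q n u)) (Icc a b) u := by
    intro n u hu
    have e := (hqd n u hu).pow 2
    refine e.congr_deriv ?_
    have := (hqpos n u hu).ne'
    field_simp
    ring
  set M := 2 * (CA + 1 + C * Q) with hM
  have hbd : ∀ n : ℕ, ∀ u ∈ Icc a b, ‖2 * (A u + 1 / ((n:ℝ) + 1) + D u * q n u)‖ ≤ M := by
    intro n u hu
    rw [Real.norm_eq_abs, abs_mul, abs_two, hM]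
    have h1 : 1 / ((n:ℝ) + 1) ≤ 1 := by
      rw [div_le_one (by positivity)]; linarith [(Nat.cast_nonneg n : (0:ℝ) ≤ n)]
    have h2 : |D u * q n u| ≤ C * Q := by
      rw [abs_mul, abs_of_pos (hqpos n u hu)]
      exact mul_le_mul (hC u hu) (hqQ n u hu) (hqpos n u hu).le hC0
    have h3 : |A u + 1 / ((n:ℝ) + 1) + D u * q n u| ≤ CA + 1 + C * Q := by
      refine (abs_add_le _ _).trans (add_le_add ((abs_add_le _ _).trans (add_le_add (hCA u hu) ?_)) h2)
      rw [abs_of_pos (hδ n)]; exact h1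
    linarith
  have hlip : ∀ n, ∀ u ∈ Icc a b, ∀ v ∈ Icc a b, ‖q n v ^ 2 - q n u ^ 2‖ ≤ M * ‖v - u‖ := by
    intro n u hu v hv
    exact (convex_Icc a b).norm_image_sub_le_of_norm_hasDerivWithin_le (hsq n) (hbd n) hu hv
  have hlip' : ∀ u ∈ Icc a b, ∀ v ∈ Icc a b, ‖p v ^ 2 - p u ^ 2‖ ≤ M * ‖v - u‖ := by
    intro u hu v hv
    exact le_of_tendsto' (((hlim v hv).pow 2).sub ((hlim u hu).pow 2)).norm
      fun n => hlip n u hu v hv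
  have hM0 : 0 ≤ M := by positivity
  have hp2c : ContinuousOn (fun u => p u ^ 2) (Icc a b) := by
    have : LipschitzOnWith (Real.toNNReal M) (fun u => p u ^ 2) (Icc a b) := by
      refine LipschitzOnWith.of_dist_le_mul fun x hx y hy => ?_
      rw [Real.coe_toNNReal _ hM0, dist_eq_norm, dist_eq_norm]
      exact hlip' y hy x hx
    exact this.continuousOn
  have hpc : ContinuousOn p (Icc a b) := by
    refine (hp2c.sqrt).congr fun u hu => ?_
    simp only
    rw [Real.sqrt_sq (hp0 u hu)]
  have hpa : p a = 0 := by
    refine tendsto_nhds_unique (hlim a haI) ?_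
    simp only [hqa]
    have := (tendsto_one_div_add_atTop_nhds_zero_nat (𝕜 := ℝ)).div_const (C + 1)
    simpa using this
  -- integral equation
  have hIntg : ∀ t ∈ Icc a b, p t ^ 2 = ∫ s in a..t, 2 * (A s + D s * p s) := by
    intro t ht
    have hsub : Icc a t ⊆ Icc a b := Icc_subset_Icc_right ht.2
    have huI : Set.uIoc a t ⊆ Icc a b := by
      rw [uIoc_of_le ht.1]; exact Ioc_subset_Icc_self.trans hsub
    have hcF : ∀ n : ℕ, ContinuousOn (fun s => 2 * (A s + 1 / ((n:ℝ) + 1) + D s * q n s)) (Icc a b) :=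
      fun n => continuousOn_const.mul ((hA.add continuousOn_const).add (hD.mul (hqc n)))
    have e : ∀ n : ℕ, (∫ s in a..t, 2 * (A s + 1 / ((n:ℝ) + 1) + D s * q n s))
        = q n t ^ 2 - q n a ^ 2 := by
      intro n
      refine intervalIntegral.integral_eq_sub_of_hasDerivAt_of_le ht.1
        (((hqc n).pow 2).mono hsub) (fun x hx => ?_) ?_
      · exact (hsq n x ⟨hx.1.le, hx.2.le.trans ht.2⟩).hasDerivAt
          (Icc_mem_nhds hx.1 (hx.2.trans_le ht.2))
      · refine ContinuousOn.intervalIntegrable ?_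
        rw [uIcc_of_le ht.1]
        exact (hcF n).mono hsub
    have l1 : Tendsto (fun n : ℕ => ∫ s in a..t, 2 * (A s + 1 / ((n:ℝ) + 1) + D s * q n s)) atTop
        (𝓝 (∫ s in a..t, 2 * (A s + D s * p s))) := by
      refine intervalIntegral.tendsto_integral_filter_of_dominated_convergence (fun _ => M) ?_ ?_ ?_ ?_
      · refine Eventually.of_forall fun n => ?_
        exact ((hcF n).mono huI).aestronglyMeasurable measurableSet_uIoc
      · exact Eventually.of_forall fun n => ae_of_all _ fun s hs => hbd n s (huI hs)
      · exact intervalIntegrable_const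
      · refine ae_of_all _ fun s hs => ?_
        have h1 : Tendsto (fun n : ℕ => A s + 1 / ((n:ℝ) + 1)) atTop (𝓝 (A s)) := by
          simpa using (tendsto_const_nhds (x := A s)).add
            (tendsto_one_div_add_atTop_nhds_zero_nat (𝕜 := ℝ))
        exact (h1.add ((hlim s (huI hs)).const_mul (D s))).const_mul 2
    have l2 : Tendsto (fun n : ℕ => q n t ^ 2 - q n a ^ 2) atTop (𝓝 (p t ^ 2 - p a ^ 2)) :=
      ((hlim t ht).pow 2).sub ((hlim a haI).pow 2)
    have := tendsto_nhds_unique l2 (l1.congr e)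
    rw [hpa] at this
    simpa using this
  have hcG : ContinuousOn (fun s => 2 * (A s + D s * p s)) (Icc a b) :=
    continuousOn_const.mul (hA.add (hD.mul hpc))
  have hder : ∀ t ∈ Ioo a b, HasDerivAt (fun u => p u ^ 2) (2 * (A t + D t * p t)) t := by
    intro t ht
    have h1 : HasDerivAt (fun u => ∫ s in a..u, 2 * (A s + D s * p s)) (2 * (A t + D t * p t)) t := by
      refine intervalIntegral.integral_hasDerivAt_right ?_ ?_ ?_
      · refine ContinuousOn.intervalIntegrable ?_
        rw [uIcc_of_le ht.1.le]
        exact hcG.mono (Icc_subset_Icc_right ht.2.le)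
      · exact (hcG.mono Ioo_subset_Icc_self).stronglyMeasurableAtFilter isOpen_Ioo t ht
      · exact hcG.continuousAt (Icc_mem_nhds ht.1 ht.2)
    refine h1.congr_of_eventuallyEq ?_
    filter_upwards [Icc_mem_nhds ht.1 ht.2] with x hx using hIntg x hx
  have hpos : ∀ t ∈ Ioo a b, 0 < p t := by
    intro t ht
    refine lt_of_le_of_ne (hp0 t (Ioo_subset_Icc_self ht)) fun h0 => ?_
    have hmin : IsLocalMin (fun u => p u ^ 2) t := by
      refine Eventually.of_forall fun x => ?_
      have h5 : p t ^ 2 ≤ p x ^ 2 := by rw [← h0]; nlinarith [sq_nonneg (p x)]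
      exact h5
    have := hmin.hasDerivAt_eq_zero (hder t ht)
    rw [← h0] at this
    have := hApos t ht
    linarith
  refine ⟨p, ⟨hpc, hpos, fun t ht => ?_⟩, hpa⟩
  have e := (hder t ht).sqrt (pow_pos (hpos t ht) 2).ne'
  have e2 : HasDerivAt p (2 * (A t + D t * p t) / (2 * √(p t ^ 2))) t := by
    refine e.congr_of_eventuallyEq ?_
    filter_upwards [Icc_mem_nhds ht.1 ht.2] with x hx
    rw [Real.sqrt_sq (hp0 x hx)]
  refine e2.congr_deriv ?_
  have hpt := hpos t ht
  rw [Real.sqrt_sq hpt.le]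
  field_simp

open scoped Topology

lemma Gr.le_right {A D1 D2 q1 q2 : ℝ → ℝ} {a b σ ρ : ℝ} (h1 : Gr A D1 a b q1) (h2 : Gr A D2 a b q2)
    (hA : ∀ u ∈ Ioo a b, A u ≤ 0) (hσ : 0 ≤ σ) (hρ : 0 ≤ ρ)
    (hD : ∀ u ∈ Ioo a b, D1 u - D2 u ≤ σ) (hb : q2 b ≤ q1 b + ρ) :
    ∀ u ∈ Icc a b, q2 u ≤ q1 u + ρ + σ * (b - u) := by
  have hm : ∀ v ∈ Ioo (-b) (-a), -v ∈ Ioo a b := fun v hv =>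
    ⟨by linarith [hv.2], by linarith [hv.1]⟩
  have := h1.reflect.le h2.reflect (σ := σ) (ρ := ρ)
    (fun v hv => by have := hA _ (hm v hv); linarith) hσ hρ
    (fun v hv => by have := hD _ (hm v hv); linarith) (by simpa using hb)
  intro u hu
  have h := this (-u) ⟨by linarith [hu.2], by linarith [hu.1]⟩
  simp only [neg_neg] at h
  linarith

lemma gr_exists_right {A D : ℝ → ℝ} {a b : ℝ} (hab : a < b) (hA : ContinuousOn A (Icc a b))
    (hD : ContinuousOn D (Icc a b)) (hApos : ∀ u ∈ Ioo a b, A u < 0) :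
    ∃ q : ℝ → ℝ, Gr A D a b q ∧ q b = 0 := by
  have hm : ∀ v ∈ Ioo (-b) (-a), -v ∈ Ioo a b := fun v hv =>
    ⟨by linarith [hv.2], by linarith [hv.1]⟩
  have hm' : MapsTo (fun v : ℝ => -v) (Icc (-b) (-a)) (Icc a b) := fun v hv =>
    ⟨by linarith [hv.2], by linarith [hv.1]⟩
  obtain ⟨q, hq, hq0⟩ := gr_exists (A := fun v => -A (-v)) (D := fun v => -D (-v)) (a := -b) (b := -a)
    (by linarith) (hA.comp continuous_neg.continuousOn hm').neg
    (hD.comp continuous_neg.continuousOn hm').neg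
    (fun v hv => by have := hApos _ (hm v hv); linarith)
  exact ⟨fun v => q (-v), hq.unreflect, hq0⟩

/-- family of damping coefficients -/
def DD (d g : ℝ → ℝ) (μ u : ℝ) : ℝ := d u + μ * g u

lemma Gr.sq_le {A D q : ℝ → ℝ} {a b C s t : ℝ} (h : Gr A D a b q) (hs : s ∈ Icc a b)
    (ht : t ∈ Icc a b) (hst : s ≤ t)
    (hC : ∀ u ∈ Ioo a b, -C ≤ 2 * (A u + D u * q u)) : q s ^ 2 ≤ q t ^ 2 + C * (t - s) := by
  have hmono : MonotoneOn (fun u => q u ^ 2 + C * u) (Icc a b) := by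
    have hd : ∀ u ∈ Ioo a b, HasDerivAt (fun u => q u ^ 2 + C * u) (2 * (A u + D u * q u) + C) u := by
      intro u hu
      have e := ((h.2.2 u hu).pow 2).add ((hasDerivAt_id u).const_mul C)
      refine e.congr_deriv ?_
      have := (h.2.1 u hu).ne'
      field_simp
      ring
    refine monotoneOn_of_deriv_nonneg (convex_Icc a b) ((h.1.pow 2).add (by fun_prop)) ?_ ?_
    · rw [interior_Icc]
      exact fun x hx => (hd x hx).differentiableAt.differentiableWithinAt
    · rw [interior_Icc]
      intro x hx
      rw [(hd x hx).deriv]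
      linarith [hC x hx]
  have := hmono hs ht hst
  simp only at this
  linarith

lemma LR_exists {A d g : ℝ → ℝ} {u1 u0 u2 : ℝ} (h10 : u1 < u0) (h02 : u0 < u2)
    (hA : ContinuousOn A (Icc u1 u2)) (hd : ContinuousOn d (Icc u1 u2))
    (hg : ContinuousOn g (Icc u1 u2)) (hgp : ∀ u ∈ Icc u1 u2, 0 ≤ g u)
    (hA1 : ∀ u ∈ Ioo u1 u0, 0 < A u) (hA2 : ∀ u ∈ Ioo u0 u2, A u < 0) :
    ∃ (L : ℝ → ℝ) (R : ℝ → ℝ → ℝ),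
      (∀ μ, ∃ q, Gr A (DD d g μ) u1 u0 q ∧ q u1 = 0 ∧ q u0 = L μ) ∧
      (∀ μ, ∀ m ∈ Ioc u0 u2, ∃ q, Gr A (DD d g μ) u0 m q ∧ q m = 0 ∧ q u0 = R m μ) ∧
      (∀ μ, R u0 μ = 0) ∧ (∀ μ, 0 ≤ L μ) ∧ Monotone L ∧ (∀ m ∈ Icc u0 u2, Antitone (R m)) ∧
      (∀ μ, MonotoneOn (fun m => R m μ) (Icc u0 u2)) ∧ Continuous L ∧
      ContinuousOn (fun p : ℝ × ℝ => R p.1 p.2) (Icc u0 u2 ×ˢ univ) := by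
  have hDc : ∀ μ, ContinuousOn (DD d g μ) (Icc u1 u2) := fun μ =>
    hd.add (continuousOn_const.mul hg)
  have s1 : Icc u1 u0 ⊆ Icc u1 u2 := Icc_subset_Icc_right h02.le
  have s2 : Icc u0 u2 ⊆ Icc u1 u2 := Icc_subset_Icc_left h10.le
  choose ql hql hql0 using fun μ => gr_exists h10 (hA.mono s1) ((hDc μ).mono s1) hA1
  have hsm : ∀ m ∈ Ioc u0 u2, Icc u0 m ⊆ Icc u1 u2 := fun m hm =>
    (Icc_subset_Icc_right hm.2).trans s2
  have hR : ∀ μ m, ∃ q : ℝ → ℝ, (m ∈ Ioc u0 u2 → Gr A (DD d g μ) u0 m q) ∧ q m = 0 := by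
    intro μ m
    by_cases hm : m ∈ Ioc u0 u2
    · obtain ⟨q, h1, h2⟩ := gr_exists_right hm.1 (hA.mono (hsm m hm)) ((hDc μ).mono (hsm m hm))
        (fun u hu => hA2 u ⟨hu.1, hu.2.trans_le hm.2⟩)
      exact ⟨q, fun _ => h1, h2⟩
    · exact ⟨fun _ => 0, fun h => absurd h hm, rfl⟩
  choose qr hqr hqr0 using hR
  obtain ⟨G, hG⟩ := isCompact_Icc.exists_bound_of_continuousOn hg
  have hG' : ∀ u ∈ Icc u1 u2, g u ≤ G := fun u hu => (le_abs_self _).trans (hG u hu)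
  have hG0 : 0 ≤ G := (norm_nonneg _).trans (hG u1 ⟨le_rfl, (h10.trans h02).le⟩)
  have hDle : ∀ μ ν, ∀ u ∈ Icc u1 u2, DD d g μ u - DD d g ν u ≤ G * |μ - ν| := by
    intro μ ν u hu
    have e : DD d g μ u - DD d g ν u = (μ - ν) * g u := by simp only [DD]; ring
    rw [e]
    calc (μ - ν) * g u ≤ |μ - ν| * g u := mul_le_mul_of_nonneg_right (le_abs_self _) (hgp u hu)
      _ ≤ |μ - ν| * G := mul_le_mul_of_nonneg_left (hG' u hu) (abs_nonneg _)
      _ = G * |μ - ν| := mul_comm _ _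
  have hDle0 : ∀ μ ν, μ ≤ ν → ∀ u ∈ Icc u1 u2, DD d g μ u - DD d g ν u ≤ 0 := by
    intro μ ν h u hu
    have e : DD d g μ u - DD d g ν u = (μ - ν) * g u := by simp only [DD]; ring
    rw [e]
    exact mul_nonpos_of_nonpos_of_nonneg (by linarith) (hgp u hu)
  have i1 : ∀ u ∈ Ioo u1 u0, u ∈ Icc u1 u2 := fun u hu => s1 (Ioo_subset_Icc_self hu)
  have hu0l : u0 ∈ Icc u1 u0 := ⟨h10.le, le_rfl⟩
  -- properties of L
  have hLlip : ∀ μ ν, ql μ u0 ≤ ql ν u0 + G * (u0 - u1) * |μ - ν| := by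
    intro μ ν
    have := (hql ν).le (hql μ) (σ := G * |μ - ν|) (ρ := 0) (fun u hu => (hA1 u hu).le)
      (by positivity) le_rfl (fun u hu => hDle μ ν u (i1 u hu)) (by rw [hql0, hql0]; simp) u0 hu0l
    linarith
  have hLmono : Monotone (fun μ => ql μ u0) := by
    intro μ ν h
    have := (hql ν).le (hql μ) (σ := 0) (ρ := 0) (fun u hu => (hA1 u hu).le)
      le_rfl le_rfl (fun u hu => hDle0 μ ν h u (i1 u hu)) (by rw [hql0, hql0]; simp) u0 hu0l
    simpa using this
  have hLc : Continuous (fun μ => ql μ u0) := by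
    have : LipschitzWith (Real.toNNReal (G * (u0 - u1))) (fun μ => ql μ u0) := by
      refine LipschitzWith.of_dist_le_mul fun x y => ?_
      rw [Real.coe_toNNReal _ (mul_nonneg hG0 (by linarith)), Real.dist_eq, Real.dist_eq, abs_le]
      have a1 := hLlip x y
      have a2 := hLlip y x
      rw [abs_sub_comm] at a2
      constructor <;> linarith
    exact this.continuous
  -- properties of R
  have i2 : ∀ m ∈ Ioc u0 u2, ∀ u ∈ Ioo u0 m, u ∈ Icc u1 u2 := fun m hm u hu =>
    hsm m hm (Ioo_subset_Icc_self hu)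
  have hA2' : ∀ m ∈ Ioc u0 u2, ∀ u ∈ Ioo u0 m, A u ≤ 0 := fun m hm u hu =>
    (hA2 u ⟨hu.1, hu.2.trans_le hm.2⟩).le
  have hu2 : u2 ∈ Ioc u0 u2 := ⟨h02, le_rfl⟩
  have hmem : ∀ m ∈ Icc u0 u2, m = u0 ∨ m ∈ Ioc u0 u2 := fun m hm => by
    rcases hm.1.eq_or_lt with h | h
    · exact Or.inl h.symm
    · exact Or.inr ⟨h, hm.2⟩
  have hRlip : ∀ m ∈ Icc u0 u2, ∀ μ ν, qr μ m u0 ≤ qr ν m u0 + G * (u2 - u0) * |μ - ν| := by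
    intro m hm μ ν
    have hW : 0 ≤ G * (u2 - u0) * |μ - ν| :=
      mul_nonneg (mul_nonneg hG0 (by linarith)) (abs_nonneg _)
    rcases hmem m hm with rfl | hm
    · rw [hqr0, hqr0]; linarith
    have := (hqr ν m hm).le_right (hqr μ m hm) (σ := G * |μ - ν|) (ρ := 0) (hA2' m hm)
      (by positivity) le_rfl (fun u hu => by
        have := hDle ν μ u (i2 m hm u hu); rwa [abs_sub_comm] at this)
      (by rw [hqr0, hqr0]; simp) u0 ⟨le_rfl, hm.1.le⟩
    have h3 : G * |μ - ν| * (m - u0) ≤ G * |μ - ν| * (u2 - u0) := by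
      have := hm.2
      gcongr
    linarith
  have hRanti : ∀ m ∈ Icc u0 u2, Antitone (fun μ => qr μ m u0) := by
    intro m hm μ ν h
    rcases hmem m hm with rfl | hm
    · simp [hqr0]
    have := (hqr μ m hm).le_right (hqr ν m hm) (σ := 0) (ρ := 0) (hA2' m hm)
      le_rfl le_rfl (fun u hu => hDle0 μ ν h u (i2 m hm u hu))
      (by rw [hqr0, hqr0]; simp) u0 ⟨le_rfl, hm.1.le⟩
    simpa using this
  have hnn : ∀ μ, ∀ m ∈ Ioc u0 u2, ∀ u ∈ Icc u0 m, 0 ≤ qr μ m u := fun μ m hm =>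
    (hqr μ m hm).nonneg hm.1
  -- m1 < m2
  have hcmp : ∀ μ, ∀ m1 ∈ Ioc u0 u2, ∀ m2 ∈ Ioc u0 u2, m1 ≤ m2 →
      (∀ u ∈ Icc u0 m1, qr μ m1 u ≤ qr μ m2 u) ∧
      (∀ u ∈ Icc u0 m1, qr μ m2 u ≤ qr μ m1 u + qr μ m2 m1) := by
    intro μ m1 hm1 m2 hm2 h
    have e2 : Gr A (DD d g μ) u0 m1 (qr μ m2) := (hqr μ m2 hm2).mono le_rfl h
    have n := hnn μ m2 hm2 m1 ⟨hm1.1.le, h⟩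
    constructor
    · intro u hu
      have := e2.le_right (hqr μ m1 hm1) (σ := 0) (ρ := 0) (hA2' m1 hm1) le_rfl le_rfl
        (fun u hu => by simp) (by rw [hqr0]; linarith) u hu
      linarith
    · intro u hu
      have := (hqr μ m1 hm1).le_right e2 (σ := 0) (ρ := qr μ m2 m1) (hA2' m1 hm1) le_rfl n
        (fun u hu => by simp) (by rw [hqr0]; linarith) u hu
      linarith
  have hmod : ∀ μ, ∃ C, ∀ m1 ∈ Icc u0 u2, ∀ m2 ∈ Icc u0 u2, m1 ≤ m2 →
      qr μ m1 u0 ≤ qr μ m2 u0 ∧ qr μ m2 u0 ≤ qr μ m1 u0 + √(C * (m2 - m1)) := by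
    intro μ
    obtain ⟨CA, hCA⟩ := isCompact_Icc.exists_bound_of_continuousOn hA
    obtain ⟨CD, hCD⟩ := isCompact_Icc.exists_bound_of_continuousOn (hDc μ)
    obtain ⟨Q, hQ⟩ := isCompact_Icc.exists_bound_of_continuousOn (hqr μ u2 hu2).1
    have hCD0 : 0 ≤ CD := (norm_nonneg _).trans (hCD u1 ⟨le_rfl, (h10.trans h02).le⟩)
    refine ⟨2 * (CA + CD * Q), fun m1 hm1 m2 hm2 h12 => ?_⟩
    rcases hmem m2 hm2 with rfl | hm2'
    · have : m1 = m2 := le_antisymm h12 hm1.1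
      subst this
      simp
    have hlow : ∀ u ∈ Ioo u0 m2, -(2 * (CA + CD * Q)) ≤ 2 * (A u + DD d g μ u * qr μ m2 u) := by
      intro u hu
      have huI := i2 m2 hm2' u hu
      have h1 := hnn μ m2 hm2' u (Ioo_subset_Icc_self hu)
      have h2 : qr μ m2 u ≤ Q := ((hcmp μ m2 hm2' u2 hu2 hm2'.2).1 u (Ioo_subset_Icc_self hu)).trans
        ((le_abs_self _).trans (hQ u ⟨hu.1.le, hu.2.le.trans hm2'.2⟩))
      have h3 : -CA ≤ A u := (abs_le.mp (hCA u huI)).1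
      have h4 : |DD d g μ u * qr μ m2 u| ≤ CD * Q := by
        rw [abs_mul, abs_of_nonneg h1]
        exact mul_le_mul (hCD u huI) h2 h1 hCD0
      have := (abs_le.mp h4).1
      linarith
    have hsq : qr μ m2 m1 ≤ √(2 * (CA + CD * Q) * (m2 - m1)) := by
      refine Real.le_sqrt_of_sq_le ?_
      have := (hqr μ m2 hm2').sq_le (s := m1) (t := m2) ⟨hm1.1, h12⟩ ⟨hm2.1, le_rfl⟩ h12 hlow
      rw [hqr0] at this
      linarith
    rcases hmem m1 hm1 with rfl | hm1'
    · rw [hqr0]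
      exact ⟨hnn μ m2 hm2' m1 ⟨le_rfl, hm2.1⟩, by linarith⟩
    · obtain ⟨h1, h2⟩ := hcmp μ m1 hm1' m2 hm2' h12
      have hu : u0 ∈ Icc u0 m1 := ⟨le_rfl, hm1.1⟩
      exact ⟨h1 u0 hu, (h2 u0 hu).trans (by linarith)⟩
  refine ⟨fun μ => ql μ u0, fun m μ => qr μ m u0, fun μ => ⟨ql μ, hql μ, hql0 μ, rfl⟩,
    fun μ m hm => ⟨qr μ m, hqr μ m hm, hqr0 μ m, rfl⟩, fun μ => hqr0 μ u0,
    fun μ => (hql μ).nonneg h10 u0 hu0l, hLmono, hRanti, ?_, hLc, ?_⟩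
  · intro μ m1 hm1 m2 hm2 h
    obtain ⟨C, hC⟩ := hmod μ
    exact (hC m1 hm1 m2 hm2 h).1
  · rintro ⟨m0, μ0⟩ ⟨hm0, -⟩
    obtain ⟨C, hC⟩ := hmod μ0
    have hb : ∀ p ∈ Icc u0 u2 ×ˢ (univ : Set ℝ), dist (qr p.2 p.1 u0) (qr μ0 m0 u0)
        ≤ G * (u2 - u0) * |p.2 - μ0| + √(C * |p.1 - m0|) := by
      rintro ⟨m, μ⟩ ⟨hm, -⟩
      simp only at hm ⊢
      rw [Real.dist_eq]
      have a1 := hRlip m hm μ μ0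
      have a2 := hRlip m hm μ0 μ
      rw [abs_sub_comm] at a2
      have a3 : |qr μ0 m u0 - qr μ0 m0 u0| ≤ √(C * |m - m0|) := by
        rcases le_total m m0 with h | h
        · have := hC m hm m0 hm0 h
          rw [abs_sub_comm m m0, abs_of_nonneg (sub_nonneg.mpr h), abs_le]
          have := Real.sqrt_nonneg (C * (m0 - m))
          constructor <;> linarith
        · have := hC m0 hm0 m hm h
          rw [abs_of_nonneg (sub_nonneg.mpr h), abs_le]
          have := Real.sqrt_nonneg (C * (m - m0))
          constructor <;> linarith
      have := abs_le.mp a3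
      rw [abs_le]
      constructor <;> linarith
    rw [ContinuousWithinAt, tendsto_iff_dist_tendsto_zero]
    refine squeeze_zero' (Eventually.of_forall fun _ => dist_nonneg)
      (eventually_nhdsWithin_of_forall hb) ?_
    have hcont : Continuous (fun p : ℝ × ℝ => G * (u2 - u0) * |p.2 - μ0| + √(C * |p.1 - m0|)) := by
      fun_prop
    have := (hcont.tendsto (m0, μ0)).mono_left (nhdsWithin_le_nhds (s := Icc u0 u2 ×ˢ univ))
    simpa using this

open scoped Topology

lemma closed_proj {F G : ℝ × ℝ → ℝ} {a b c d : ℝ}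
    (hF : ContinuousOn F (Icc a b ×ˢ Icc c d)) (hG : ContinuousOn G (Icc a b ×ˢ Icc c d)) :
    IsClosed {μ : ℝ | μ ∈ Icc c d ∧ ∃ m ∈ Icc a b, F (m, μ) ≤ 0 ∧ G (m, μ) ≤ 0} := by
  have hc : IsCompact (Icc a b ×ˢ Icc c d) := isCompact_Icc.prod isCompact_Icc
  have h1 : IsClosed ((Icc a b ×ˢ Icc c d) ∩ F ⁻¹' Iic 0) :=
    hF.preimage_isClosed_of_isClosed hc.isClosed isClosed_Iic
  have h2 : IsClosed ((Icc a b ×ˢ Icc c d) ∩ G ⁻¹' Iic 0) :=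
    hG.preimage_isClosed_of_isClosed hc.isClosed isClosed_Iic
  have h3 : IsCompact (((Icc a b ×ˢ Icc c d) ∩ F ⁻¹' Iic 0) ∩ ((Icc a b ×ˢ Icc c d) ∩ G ⁻¹' Iic 0)) :=
    hc.of_isClosed_subset (h1.inter h2) (fun x hx => hx.1.1)
  convert (h3.image continuous_snd).isClosed using 1
  ext μ
  constructor
  · rintro ⟨hμ, m, hm, h, h'⟩
    exact ⟨(m, μ), ⟨⟨⟨hm, hμ⟩, h⟩, ⟨⟨hm, hμ⟩, h'⟩⟩, rfl⟩
  · rintro ⟨⟨m, μ'⟩, ⟨⟨⟨hm, hμ⟩, h⟩, ⟨_, h'⟩⟩, rfl⟩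
    exact ⟨hμ, m, hm, h, h'⟩

lemma topo {Lp Lm : ℝ → ℝ} {Rp Rm : ℝ → ℝ → ℝ} {u0 u2 μf μb : ℝ} (h02 : u0 ≤ u2) (hlt : μf ≤ μb)
    (cLp : Continuous Lp) (cLm : Continuous Lm)
    (cRp : ContinuousOn (fun p : ℝ × ℝ => Rp p.1 p.2) (Icc u0 u2 ×ˢ univ))
    (cRm : ContinuousOn (fun p : ℝ × ℝ => Rm p.1 p.2) (Icc u0 u2 ×ˢ univ))
    (mRp : ∀ μ, MonotoneOn (fun m => Rp m μ) (Icc u0 u2))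
    (mRm : ∀ μ, MonotoneOn (fun m => Rm m μ) (Icc u0 u2))
    (bp0 : ∀ μ ∈ Icc μf μb, Rp u0 μ ≤ Lp μ) (bm0 : ∀ μ ∈ Icc μf μb, Rm u0 μ ≤ Lm μ)
    (bp : ∀ μ ∈ Icc μf μb, Lp μ ≤ Rp u2 μ) (bm : ∀ μ ∈ Icc μf μb, Lm μ ≤ Rm u2 μ)
    (eb : Lp μb = Rp u2 μb) (ef : Lm μf = Rm u2 μf) :
    ∃ μ ∈ Icc μf μb, ∃ m ∈ Icc u0 u2, Lp μ = Rp m μ ∧ Lm μ = Rm m μ := by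
  have cRp' : ∀ μ, ContinuousOn (fun m => Rp m μ) (Icc u0 u2) := fun μ =>
    cRp.comp (f := fun m : ℝ => (m, μ)) (by fun_prop) (fun m hm => ⟨hm, mem_univ _⟩)
  have cRm' : ∀ μ, ContinuousOn (fun m => Rm m μ) (Icc u0 u2) := fun μ =>
    cRm.comp (f := fun m : ℝ => (m, μ)) (by fun_prop) (fun m hm => ⟨hm, mem_univ _⟩)
  have sub : Icc u0 u2 ×ˢ Icc μf μb ⊆ Icc u0 u2 ×ˢ (univ : Set ℝ) := fun x hx => ⟨hx.1, mem_univ _⟩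
  have cRp2 := cRp.mono sub
  have cRm2 := cRm.mono sub
  have cLp2 : ContinuousOn (fun p : ℝ × ℝ => Lp p.2) (Icc u0 u2 ×ˢ Icc μf μb) :=
    (cLp.comp continuous_snd).continuousOn
  have cLm2 : ContinuousOn (fun p : ℝ × ℝ => Lm p.2) (Icc u0 u2 ×ˢ Icc μf μb) :=
    (cLm.comp continuous_snd).continuousOn
  have cS := closed_proj (cLp2.sub cRp2) (cRm2.sub cLm2)
  have cT := closed_proj (cRp2.sub cLp2) (cLm2.sub cRm2)
  have m2 : u2 ∈ Icc u0 u2 := ⟨h02, le_rfl⟩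
  have mf : μf ∈ Icc μf μb := ⟨le_rfl, hlt⟩
  have mb : μb ∈ Icc μf μb := ⟨hlt, le_rfl⟩
  have := isPreconnected_closed_iff.mp (isPreconnected_Icc (a := μf) (b := μb)) _ _ cS cT ?_ ?_ ?_
  · obtain ⟨μ, hμ, ⟨_, s, hs, s1, s2⟩, ⟨_, t, ht, t1, t2⟩⟩ := this
    simp only [Pi.sub_apply, sub_nonpos] at s1 s2 t1 t2
    refine ⟨μ, hμ, ?_⟩
    rcases le_total s t with hst | hst
    · have hsub : Icc s t ⊆ Icc u0 u2 := Icc_subset_Icc hs.1 ht.2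
      obtain ⟨m, hm, e⟩ := intermediate_value_Icc hst ((cRm' μ).mono hsub) ⟨s2, t2⟩
      refine ⟨m, hsub hm, le_antisymm ?_ ?_, e.symm⟩
      · exact s1.trans (mRp μ hs (hsub hm) hm.1)
      · exact (mRp μ (hsub hm) ht hm.2).trans t1
    · have hsub : Icc t s ⊆ Icc u0 u2 := Icc_subset_Icc ht.1 hs.2
      obtain ⟨m, hm, e⟩ := intermediate_value_Icc hst ((cRp' μ).mono hsub) ⟨t1, s1⟩
      refine ⟨m, hsub hm, e.symm, le_antisymm ?_ ?_⟩
      · exact t2.trans (mRm μ ht (hsub hm) hm.1)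
      · exact (mRm μ (hsub hm) hs hm.2).trans s2
  · intro μ hμ
    obtain ⟨m, hm, e⟩ := intermediate_value_Icc h02 (cRp' μ) ⟨bp0 μ hμ, bp μ hμ⟩
    obtain ⟨n, hn, e'⟩ := intermediate_value_Icc h02 (cRm' μ) ⟨bm0 μ hμ, bm μ hμ⟩
    simp only at e e'
    rcases le_total m n with h | h
    · left
      refine ⟨hμ, m, hm, ?_, ?_⟩
      · simp [e]
      · have := mRm μ hm hn h
        simp only [Pi.sub_apply, sub_nonpos]
        linarith
    · right
      refine ⟨hμ, m, hm, ?_, ?_⟩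
      · simp [e]
      · have := mRm μ hn hm h
        simp only [Pi.sub_apply, sub_nonpos]
        linarith
  · exact ⟨μf, mf, mf, u2, m2, by simpa using bp μf mf, by simp [ef]⟩
  · exact ⟨μb, mb, mb, u2, m2, by simp [eb], by simpa using bm μb mb⟩

open scoped Topology

lemma deg_left {A D q : ℝ → ℝ} {a b A0 : ℝ} (h : Gr A D a b q) (hab : a < b) (hb : q b = 0)
    (hA : HasDerivAt A A0 b) (hAb : A b = 0) (hA0 : A0 < 0) (hD : ContinuousAt D b) : D b < 0 := by
  by_contra hcon
  push Not at hcon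
  set α := -A0 / 2 with hα
  have hαp : 0 < α := by rw [hα]; linarith
  set ε := min 1 (α / 2) with hε
  have hεp : 0 < ε := by rw [hε]; positivity
  have hε2 : ε * ε < α := by
    have h1 : ε ≤ 1 := min_le_left _ _
    have h2 : ε ≤ α / 2 := min_le_right _ _
    nlinarith
  have e1 : ∀ᶠ u in 𝓝 b, -ε < D u := hD.eventually (lt_mem_nhds (by linarith))
  have e2 : ∀ᶠ u in 𝓝[≠] b, slope A b u < A0 / 2 :=
    (hasDerivAt_iff_tendsto_slope.mp hA).eventually (gt_mem_nhds (by linarith))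
  have e2' := eventually_nhdsWithin_iff.mp e2
  obtain ⟨δ, hδ, hδ'⟩ := Metric.eventually_nhds_iff.mp (e1.and e2')
  set s := max ((a + b) / 2) (b - δ / 2) with hs
  have hsb : s < b := max_lt (by linarith) (by linarith)
  have hsa : a < s := lt_of_lt_of_le (by linarith) (le_max_left _ _)
  have hsδ : b - δ < s := lt_of_lt_of_le (by linarith) (le_max_right _ _)
  have hsub : Icc s b ⊆ Icc a b := Icc_subset_Icc hsa.le le_rfl
  have key : ∀ u ∈ Ioo s b, -ε < D u ∧ α * (b - u) ≤ A u := by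
    intro u hu
    have h1 := hδ' (y := u) (by rw [Real.dist_eq, abs_lt]; constructor <;> linarith [hu.1, hu.2])
    refine ⟨h1.1, ?_⟩
    have h2 := h1.2 (ne_of_lt hu.2)
    rw [slope_def_field, hAb, sub_zero, div_lt_iff_of_neg (by linarith [hu.2])] at h2
    rw [hα]; nlinarith
  have hmem : ∀ u ∈ Ioo s b, u ∈ Ioo a b := fun u hu => ⟨hsa.trans hu.1, hu.2⟩
  have hmono : MonotoneOn (fun u => q u + ε * u) (Icc s b) := by
    have hd : ∀ u ∈ Ioo s b, HasDerivAt (fun u => q u + ε * u) (A u / q u + D u + ε * 1) u :=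
      fun u hu => (h.2.2 u (hmem u hu)).add ((hasDerivAt_id u).const_mul ε)
    refine monotoneOn_of_deriv_nonneg (convex_Icc _ _) ?_ ?_ ?_
    · exact (h.1.mono hsub).add (by fun_prop)
    · rw [interior_Icc]; exact fun u hu => (hd u hu).differentiableAt.differentiableWithinAt
    · rw [interior_Icc]; intro u hu
      rw [(hd u hu).deriv]
      have h1 := key u hu
      have : 0 ≤ A u / q u := div_nonneg (by nlinarith [hu.2]) (h.2.1 u (hmem u hu)).le
      linarith
  have hq : ∀ u ∈ Icc s b, q u ≤ ε * (b - u) := by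
    intro u hu
    have := hmono hu ⟨hsb.le, le_rfl⟩ hu.2
    simp only [hb] at this
    linarith
  have hstrict : StrictMonoOn q (Icc s b) := by
    refine strictMonoOn_of_deriv_pos (convex_Icc _ _) (h.1.mono hsub) ?_
    rw [interior_Icc]; intro u hu
    rw [(h.2.2 u (hmem u hu)).deriv]
    have h1 := key u hu
    have h2 := hq u (Ioo_subset_Icc_self hu)
    have h3 := h.2.1 u (hmem u hu)
    have : α / ε ≤ A u / q u := by
      rw [div_le_div_iff₀ hεp h3]
      nlinarith
    have : ε < α / ε := by rwa [lt_div_iff₀ hεp]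
    linarith
  have := hstrict ⟨le_rfl, hsb.le⟩ ⟨hsb.le, le_rfl⟩ hsb
  rw [hb] at this
  linarith [h.2.1 s ⟨hsa, hsb⟩]

lemma deg_right {A D q : ℝ → ℝ} {a b A0 : ℝ} (h : Gr A D a b q) (hab : a < b) (ha : q a = 0)
    (hA : HasDerivAt A A0 a) (hAa : A a = 0) (hA0 : A0 < 0) (hD : ContinuousAt D a) : 0 < D a := by
  have hA' : HasDerivAt (fun v => -A (-v)) A0 (-a) := by
    have e : HasDerivAt A A0 (-(-a)) := by rwa [neg_neg]
    exact ((e.scomp (-a) (hasDerivAt_neg (-a))).neg).congr_deriv (by simp)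
  have hD' : ContinuousAt (fun v => -D (-v)) (-a) := by
    have e : ContinuousAt D (-(-a)) := by rwa [neg_neg]
    exact (ContinuousAt.comp (f := fun v : ℝ => -v) e continuous_neg.continuousAt).neg
  have := deg_left h.reflect (by linarith) (by simpa using ha) hA' (by simpa using hAa) hA0 hD'
  simp only [neg_neg] at this
  linarith

lemma ends_lt {A d g q1 q2 : ℝ → ℝ} {u1 u0 u2 m1 m2 μ1 μ2 : ℝ} (h10 : u1 < u0)
    (hA1 : ∀ u ∈ Ioo u1 u0, 0 < A u) (hA2 : ∀ u ∈ Ioo u0 u2, A u < 0)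
    (hg : ∀ u ∈ Icc u1 u2, 0 < g u)
    (hm1 : u0 < m1) (hm2 : u0 < m2) (hm1' : m1 ≤ u2) (hm2' : m2 ≤ u2)
    (h1 : Gr A (DD d g μ1) u1 m1 q1) (h2 : Gr A (DD d g μ2) u1 m2 q2)
    (z1 : q1 u1 = 0) (z2 : q2 u1 = 0) (e2 : q2 m2 = 0) (hlt : μ1 < μ2) : m1 < m2 := by
  by_contra hcon
  push Not at hcon
  have hD : ∀ u ∈ Ioo u1 u2, DD d g μ1 u - DD d g μ2 u ≤ 0 := fun u hu => by
    have := hg u (Ioo_subset_Icc_self hu); unfold DD; nlinarith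
  have k1 := (h2.mono le_rfl hm2.le).le (h1.mono le_rfl hm1.le) (σ := 0) (ρ := 0)
    (fun u hu => (hA1 u hu).le) le_rfl le_rfl
    (fun u hu => hD u ⟨hu.1, by linarith [hu.2]⟩) (by simp [z1, z2])
  have k2 := (h1.mono h10.le hcon).le_right (h2.mono h10.le le_rfl) (σ := 0) (ρ := 0)
    (fun u hu => (hA2 u ⟨hu.1, by linarith [hu.2]⟩).le) le_rfl le_rfl
    (fun u hu => hD u ⟨by linarith [hu.1], by linarith [hu.2]⟩)
    (by rw [e2, add_zero]; exact h1.nonneg (by linarith) _ ⟨by linarith, hcon⟩)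
  have eq : q1 u0 = q2 u0 := by
    have a1 := k1 u0 ⟨h10.le, le_rfl⟩
    have a2 := k2 u0 ⟨le_rfl, hm2.le⟩
    linarith
  have hd : HasDerivAt (fun u => q2 u - q1 u) ((μ2 - μ1) * g u0) u0 :=
    ((h2.2.2 u0 ⟨h10, hm2⟩).sub (h1.2.2 u0 ⟨h10, hm1⟩)).congr_deriv (by
      rw [eq]; unfold DD; ring)
  have hpos : 0 < (μ2 - μ1) * g u0 := mul_pos (by linarith) (hg u0 ⟨h10.le, by linarith⟩)
  have ev := (hasDerivAt_iff_tendsto_slope.mp hd).eventually (lt_mem_nhds hpos)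
  have ev' : ∀ᶠ u in 𝓝[<] u0, 0 < slope (fun u => q2 u - q1 u) u0 u :=
    ev.filter_mono (nhdsWithin_mono _ fun x hx => ne_of_lt hx)
  obtain ⟨u, hu, hu'⟩ := (ev'.and (Ioo_mem_nhdsLT h10)).exists
  have a1 := k1 u (Ioo_subset_Icc_self hu')
  rw [slope_def_field, eq, div_pos_iff] at hu
  rcases hu with hu | hu
  · linarith [hu.2, hu'.2]
  · linarith [hu.1]

lemma ends_le_eq {A D q1 q2 : ℝ → ℝ} {u1 u0 u2 m1 m2 : ℝ} (h10 : u1 < u0)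
    (hA : ContinuousOn A (Icc u1 u2))
    (hA1 : ∀ u ∈ Ioo u1 u0, 0 < A u) (hA2 : ∀ u ∈ Ioo u0 u2, A u < 0)
    (hm2 : u0 < m2) (hm1' : m1 ≤ u2)
    (h1 : Gr A D u1 m1 q1) (h2 : Gr A D u1 m2 q2)
    (z1 : q1 u1 = 0) (z2 : q2 u1 = 0) (e2 : q2 m2 = 0) : m1 ≤ m2 := by
  by_contra hcon
  push Not at hcon
  have hm1 : u0 < m1 := by linarith
  have k1 := (h2.mono le_rfl hm2.le).le (h1.mono le_rfl hm1.le) (σ := 0) (ρ := 0)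
    (fun u hu => (hA1 u hu).le) le_rfl le_rfl (fun u hu => by simp) (by simp [z1, z2])
  have k2 := (h1.mono le_rfl hm1.le).le (h2.mono le_rfl hm2.le) (σ := 0) (ρ := 0)
    (fun u hu => (hA1 u hu).le) le_rfl le_rfl (fun u hu => by simp) (by simp [z1, z2])
  have eq : q1 u0 = q2 u0 := by
    have a1 := k1 u0 ⟨h10.le, le_rfl⟩
    have a2 := k2 u0 ⟨h10.le, le_rfl⟩
    linarith
  have main : ∀ t ∈ Ioo u0 m2, q1 t - q2 t = 0 := by
    intro t ht
    have hs : ∀ u ∈ Icc u0 t, u ∈ Ioo u1 m1 ∧ u ∈ Ioo u1 m2 := fun u hu =>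
      ⟨⟨by linarith [hu.1], by linarith [hu.2, ht.2]⟩, ⟨by linarith [hu.1], by linarith [hu.2, ht.2]⟩⟩
    have c1 : ContinuousOn q1 (Icc u0 t) := h1.1.mono fun u hu => Ioo_subset_Icc_self (hs u hu).1
    have c2 : ContinuousOn q2 (Icc u0 t) := h2.1.mono fun u hu => Ioo_subset_Icc_self (hs u hu).2
    have cA : ContinuousOn A (Icc u0 t) :=
      hA.mono (Icc_subset_Icc h10.le (by linarith [ht.2]))
    have cq : ContinuousOn (fun u => A u / (q1 u * q2 u)) (Icc u0 t) :=
      cA.div (c1.mul c2) fun u hu =>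
        (mul_pos (h1.2.1 u (hs u hu).1) (h2.2.1 u (hs u hu).2)).ne'
    obtain ⟨C, hC⟩ := isCompact_Icc.exists_bound_of_continuousOn cq
    refine eq_zero_of_abs_deriv_le_mul_abs_self_of_eq_zero_right (f := fun u => q1 u - q2 u)
      (f' := fun u => (A u / q1 u + D u) - (A u / q2 u + D u)) (K := C)
      (c1.sub c2) (fun u hu => ?_) (by simp [eq]) (fun u hu => ?_) t ⟨ht.1.le, le_rfl⟩
    · have := hs u (Ico_subset_Icc_self hu)
      exact ((h1.2.2 u this.1).sub (h2.2.2 u this.2)).hasDerivWithinAt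
    · have hh := hs u (Ico_subset_Icc_self hu)
      have p1 := (h1.2.1 u hh.1).ne'
      have p2 := (h2.2.1 u hh.2).ne'
      have : (A u / q1 u + D u) - (A u / q2 u + D u) = -(A u / (q1 u * q2 u)) * (q1 u - q2 u) := by
        field_simp; ring
      rw [this, norm_mul, norm_neg]
      exact mul_le_mul_of_nonneg_right (hC u (Ico_subset_Icc_self hu)) (norm_nonneg _)
  have hcl : IsClosed (Icc u0 m2 ∩ (fun u => q1 u - q2 u) ⁻¹' {0}) :=
    ((h1.1.mono (Icc_subset_Icc h10.le hcon.le)).sub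
      (h2.1.mono (Icc_subset_Icc h10.le le_rfl))).preimage_isClosed_of_isClosed
        isClosed_Icc isClosed_singleton
  have : Ioo u0 m2 ⊆ Icc u0 m2 ∩ (fun u => q1 u - q2 u) ⁻¹' {0} := fun x hx =>
    ⟨Ioo_subset_Icc_self hx, main x hx⟩
  have h3 := hcl.closure_subset_iff.mpr this
  rw [closure_Ioo hm2.ne] at h3
  have h4 : q1 m2 - q2 m2 = 0 := (h3 ⟨hm2.le, le_rfl⟩).2
  have := h1.2.1 m2 ⟨by linarith, hcon⟩
  linarith

open scoped Topology

/-- zero-ended graph -/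
def ZG (A D : ℝ → ℝ) (a m : ℝ) (q : ℝ → ℝ) : Prop := Gr A D a m q ∧ q a = 0 ∧ q m = 0

lemma left_unique {A D q1 q2 : ℝ → ℝ} {a b : ℝ} (hab : a ≤ b) (h1 : Gr A D a b q1)
    (h2 : Gr A D a b q2)
    (hA : ∀ u ∈ Ioo a b, 0 < A u) (z : q1 a = q2 a) : q1 b = q2 b := by
  have k1 := h1.le h2 (σ := 0) (ρ := 0) (fun u hu => (hA u hu).le) le_rfl le_rfl
    (fun u hu => by simp) (by simp [z]) b ⟨hab, le_rfl⟩
  have k2 := h2.le h1 (σ := 0) (ρ := 0) (fun u hu => (hA u hu).le) le_rfl le_rfl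
    (fun u hu => by simp) (by simp [z]) b ⟨hab, le_rfl⟩
  linarith

lemma right_unique {A D q1 q2 : ℝ → ℝ} {a b : ℝ} (hab : a ≤ b) (h1 : Gr A D a b q1)
    (h2 : Gr A D a b q2)
    (hA : ∀ u ∈ Ioo a b, A u < 0) (z : q1 b = q2 b) : q1 a = q2 a := by
  have k1 := h1.le_right h2 (σ := 0) (ρ := 0) (fun u hu => (hA u hu).le) le_rfl le_rfl
    (fun u hu => by simp) (by simp [z]) a ⟨le_rfl, hab⟩
  have k2 := h2.le_right h1 (σ := 0) (ρ := 0) (fun u hu => (hA u hu).le) le_rfl le_rfl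
    (fun u hu => by simp) (by simp [z]) a ⟨le_rfl, hab⟩
  linarith

lemma glue_zero {A D : ℝ → ℝ} {u1 u0 m A0 : ℝ} (h10 : u1 < u0) (h0m : u0 < m)
    (hA : HasDerivAt A A0 u0) (hAu : A u0 = 0) (hA0 : A0 < 0) (hD : ContinuousAt D u0)
    {q1 q2 : ℝ → ℝ} (h1 : Gr A D u1 u0 q1) (h2 : Gr A D u0 m q2) (z1 : q1 u1 = 0) (z2 : q2 m = 0)
    (e : q1 u0 = q2 u0) : ∃ q, ZG A D u1 m q := by
  have hp : 0 < q1 u0 := by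
    rcases (h1.nonneg h10 u0 ⟨h10.le, le_rfl⟩).eq_or_lt with h | h
    · have a1 := deg_left h1 h10 h.symm hA hAu hA0 hD
      have a2 := deg_right h2 h0m (by rw [← e, ← h]) hA hAu hA0 hD
      linarith
    · exact h
  refine ⟨_, Gr.glue h10 h0m h1 h2 hA.continuousAt hD e hp, ?_, ?_⟩
  · simp [h10.le, z1]
  · simp [not_le.mpr h0m, z2]

lemma graphs_exist {A d g qb qf : ℝ → ℝ} {u1 u0 u2 A0 μf μb : ℝ} (h10 : u1 < u0) (h02 : u0 < u2)
    (hA : ContinuousOn A (Icc u1 u2)) (hd : ContinuousOn d (Icc u1 u2))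
    (hg : ContinuousOn g (Icc u1 u2)) (hgp : ∀ u ∈ Icc u1 u2, 0 < g u)
    (hA1 : ∀ u ∈ Ioo u1 u0, 0 < A u) (hA2 : ∀ u ∈ Ioo u0 u2, A u < 0)
    (hA' : HasDerivAt A A0 u0) (hAu : A u0 = 0) (hA0 : A0 < 0)
    (hb : ZG A (DD d g μb) u1 u2 qb) (hf : ZG A (DD (fun u => -d u) g (-μf)) u1 u2 qf)
    (hlt : μf ≤ μb) :
    ∃ μ ∈ Icc μf μb, ∃ m ∈ Ioc u0 u2, ∃ qp qm, ZG A (DD d g μ) u1 m qp ∧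
      ZG A (DD (fun u => -d u) g (-μ)) u1 m qm := by
  have hgp' : ∀ u ∈ Icc u1 u2, 0 ≤ g u := fun u hu => (hgp u hu).le
  obtain ⟨Lp, Rp, p1, p2, p3, p4, p5, p6, p7, p8, p9⟩ := LR_exists h10 h02 hA hd hg hgp' hA1 hA2
  obtain ⟨Lm, Rm, m1, m2, m3, m4, m5, m6, m7, m8, m9⟩ := LR_exists (d := fun u => -d u) h10 h02 hA hd.neg hg hgp' hA1 hA2
  have dc : ContinuousAt d u0 := hd.continuousAt (Icc_mem_nhds h10 h02)
  have gc : ContinuousAt g u0 := hg.continuousAt (Icc_mem_nhds h10 h02)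
  have Dc : ∀ μ, ContinuousAt (DD d g μ) u0 := fun μ => dc.add (continuousAt_const.mul gc)
  have Dc' : ∀ μ, ContinuousAt (DD (fun u => -d u) g μ) u0 := fun μ =>
    dc.neg.add (continuousAt_const.mul gc)
  have mem2 : u2 ∈ Icc u0 u2 := ⟨h02.le, le_rfl⟩
  have eb : Lp μb = Rp u2 μb := by
    obtain ⟨q, hq, z, e⟩ := p1 μb
    obtain ⟨q', hq', z', e'⟩ := p2 μb u2 ⟨h02, le_rfl⟩
    rw [← e, ← e', left_unique h10.le hq (hb.1.mono le_rfl h02.le) hA1 (by rw [z, hb.2.1]),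
      right_unique h02.le hq' (hb.1.mono h10.le le_rfl) hA2 (by rw [z', hb.2.2])]
  have ef : Lm (-μf) = Rm u2 (-μf) := by
    obtain ⟨q, hq, z, e⟩ := m1 (-μf)
    obtain ⟨q', hq', z', e'⟩ := m2 (-μf) u2 ⟨h02, le_rfl⟩
    rw [← e, ← e', left_unique h10.le hq (hf.1.mono le_rfl h02.le) hA1 (by rw [z, hf.2.1]),
      right_unique h02.le hq' (hf.1.mono h10.le le_rfl) hA2 (by rw [z', hf.2.2])]
  obtain ⟨μ, hμ, m, hm, e1, e2⟩ := topo (Lp := Lp) (Lm := fun μ => Lm (-μ)) (Rp := Rp)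
    (Rm := fun m μ => Rm m (-μ)) h02.le hlt p8 (m8.comp continuous_neg) p9
    (m9.comp (f := fun p : ℝ × ℝ => (p.1, -p.2)) (by fun_prop) (fun p hp => ⟨hp.1, mem_univ _⟩))
    p7 (fun μ => m7 (-μ)) (fun μ _ => by rw [p3]; exact p4 μ) (fun μ _ => by rw [m3]; exact m4 _)
    (fun μ hμ => (p5 hμ.2).trans (eb.trans_le (p6 u2 mem2 hμ.2)))
    (fun μ hμ => (m5 (neg_le_neg hμ.1)).trans (ef.trans_le (m6 u2 mem2 (neg_le_neg hμ.1))))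
    eb ef
  obtain ⟨q, hq, z, e⟩ := p1 μ
  obtain ⟨r, hr, y, f⟩ := m1 (-μ)
  have hm0 : u0 < m := by
    refine lt_of_le_of_ne hm.1 fun hne => ?_
    rw [← hne, p3] at e1
    rw [← hne] at e2
    simp only [m3] at e2
    have a1 := deg_left hq h10 (by rw [e, e1]) hA' hAu hA0 (Dc _)
    have a2 := deg_left hr h10 (by rw [f, e2]) hA' hAu hA0 (Dc' _)
    unfold DD at a1 a2
    linarith
  obtain ⟨q', hq', z', e'⟩ := p2 μ m ⟨hm0, hm.2⟩
  obtain ⟨r', hr', y', f'⟩ := m2 (-μ) m ⟨hm0, hm.2⟩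
  obtain ⟨qp, hqp⟩ := glue_zero h10 hm0 hA' hAu hA0 (Dc _) hq hq' z z' (by rw [e, e', e1])
  obtain ⟨qm, hqm⟩ := glue_zero h10 hm0 hA' hAu hA0 (Dc' _) hr hr' y y' (by rw [f, f', e2])
  exact ⟨μ, hμ, m, ⟨hm0, hm.2⟩, qp, qm, hqp, hqm⟩

/-- clamp -/
def cl (a b x : ℝ) : ℝ := max a (min b x)

lemma cl_mem {a b : ℝ} (h : a ≤ b) (x : ℝ) : cl a b x ∈ Icc a b :=
  ⟨le_max_left _ _, max_le h (min_le_left _ _)⟩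

lemma cl_eq {a b x : ℝ} (h : x ∈ Icc a b) : cl a b x = x := by
  unfold cl; rw [min_eq_right h.2, max_eq_right h.1]

lemma cl_neg {a b : ℝ} (h : a ≤ b) (x : ℝ) : cl (-b) (-a) (-x) = -cl a b x := by
  unfold cl
  rcases le_total b x with h1 | h1 <;> rcases le_total a x with h2 | h2 <;>
    simp [min_def, max_def] <;> split_ifs <;> linarith

lemma cl_lip (a b : ℝ) : LipschitzWith 1 (cl a b) :=
  (LipschitzWith.id.const_min b).const_max a

/-- the planar vector field -/
def Fld (A D : ℝ → ℝ) (p : ℝ × ℝ) : ℝ × ℝ := (p.2, A p.1 + D p.1 * p.2)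

/-- clamped field -/
def CF (A D : ℝ → ℝ) (α β M : ℝ) (p : ℝ × ℝ) : ℝ × ℝ := Fld A D (cl α β p.1, cl (-M) M p.2)

/-- Lipschitz on an interval -/
def Lip (A : ℝ → ℝ) (α β : ℝ) : Prop := ∃ K : ℝ≥0, LipschitzOnWith K A (Icc α β)

lemma Lip.neg {A : ℝ → ℝ} {α β : ℝ} (h : Lip A α β) : Lip (fun u => -A u) α β := by
  obtain ⟨K, h⟩ := h
  refine ⟨K, fun x hx y hy => ?_⟩
  simpa using h hx hy

lemma Lip.reflect {A : ℝ → ℝ} {α β : ℝ} (h : Lip A α β) : Lip (fun u => -A (-u)) (-β) (-α) := by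
  obtain ⟨K, h⟩ := h
  refine ⟨K, fun x hx y hy => ?_⟩
  have := h (x := -x) ⟨by linarith [hx.2], by linarith [hx.1]⟩ (y := -y)
    ⟨by linarith [hy.2], by linarith [hy.1]⟩
  simpa using this

lemma fld_lip {A D : ℝ → ℝ} {α β M : ℝ} (hA : Lip A α β) (hD : Lip D α β) :
    ∃ K : ℝ≥0, LipschitzOnWith K (Fld A D) (Icc α β ×ˢ Icc (-M) M) := by
  obtain ⟨KA, hA⟩ := hA
  obtain ⟨KD, hD⟩ := hD
  obtain ⟨B, hB⟩ := isCompact_Icc.exists_bound_of_continuousOn hD.continuousOn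
  refine ⟨(1 + KA + KD * |M| + |B|).toNNReal, LipschitzOnWith.of_dist_le_mul ?_⟩
  rintro ⟨x1, x2⟩ ⟨hx1, hx2⟩ ⟨y1, y2⟩ ⟨hy1, hy2⟩
  have hnn : (0:ℝ) ≤ 1 + KA + KD * |M| + |B| := by positivity
  rw [Real.coe_toNNReal _ hnn]
  simp only at hx1 hx2 hy1 hy2
  have e1 : dist (A x1) (A y1) ≤ KA * dist x1 y1 := hA.dist_le_mul _ hx1 _ hy1
  have e2 : dist (D x1) (D y1) ≤ KD * dist x1 y1 := hD.dist_le_mul _ hx1 _ hy1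
  have e3 : |D y1| ≤ |B| := (hB y1 hy1).trans (le_abs_self _)
  have e4 : |x2| ≤ |M| := (abs_le.mpr hx2).trans (le_abs_self _)
  rw [Prod.dist_eq]
  simp only [Fld, Prod.dist_eq]
  set δ := max (dist x1 y1) (dist x2 y2) with hδ
  have d1 : dist x1 y1 ≤ δ := le_max_left _ _
  have d2 : dist x2 y2 ≤ δ := le_max_right _ _
  have dp : 0 ≤ δ := dist_nonneg.trans d1
  rw [Real.dist_eq] at e1 e2
  have KAp : (0:ℝ) ≤ KA := KA.2
  have KDp : (0:ℝ) ≤ KD := KD.2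
  apply max_le
  · have : 0 ≤ (KA + KD * |M| + |B|) * δ := by positivity
    linarith
  · rw [Real.dist_eq]
    have : A x1 + D x1 * x2 - (A y1 + D y1 * y2) =
      (A x1 - A y1) + ((D x1 - D y1) * x2 + D y1 * (x2 - y2)) := by ring
    rw [this]
    refine (abs_add_le _ _).trans ?_
    have s1 : |(D x1 - D y1) * x2 + D y1 * (x2 - y2)| ≤ (KD * δ) * |M| + |B| * δ := by
      refine (abs_add_le _ _).trans ?_
      rw [abs_mul, abs_mul]
      refine add_le_add ?_ ?_
      · exact mul_le_mul (e2.trans (mul_le_mul_of_nonneg_left d1 KDp)) e4 (abs_nonneg _) (by positivity)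
      · exact mul_le_mul e3 d2 (abs_nonneg _) (abs_nonneg _)
    have s2 : |A x1 - A y1| ≤ KA * δ := e1.trans (mul_le_mul_of_nonneg_left d1 KAp)
    nlinarith

lemma cf_lip {A D : ℝ → ℝ} {α β M : ℝ} (hαβ : α ≤ β) (hM : 0 ≤ M) (hA : Lip A α β) (hD : Lip D α β) :
    ∃ K : ℝ≥0, LipschitzWith K (CF A D α β M) := by
  obtain ⟨K, hK⟩ := fld_lip (M := M) hA hD
  have h1 : LipschitzWith 1 (fun p : ℝ × ℝ => (cl α β p.1, cl (-M) M p.2)) := by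
    have := ((cl_lip α β).comp LipschitzWith.prod_fst).prodMk
      ((cl_lip (-M) M).comp (LipschitzWith.prod_snd (α := ℝ) (β := ℝ)))
    simpa using this
  refine ⟨K * 1, ?_⟩
  rw [← lipschitzOnWith_univ]
  exact hK.comp (h1.lipschitzOnWith (s := univ)) (fun p _ => ⟨cl_mem hαβ _, cl_mem (by linarith) _⟩)

lemma cf_bdd {A D : ℝ → ℝ} {α β M : ℝ} (hαβ : α ≤ β) (hM : 0 ≤ M) (hA : Lip A α β) (hD : Lip D α β) :
    ∃ B : ℝ≥0, ∀ p, ‖CF A D α β M p‖ ≤ B := by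
  obtain ⟨K, hK⟩ := fld_lip (M := M) hA hD
  obtain ⟨B, hB⟩ := (isCompact_Icc.prod isCompact_Icc).exists_bound_of_continuousOn hK.continuousOn
  refine ⟨B.toNNReal, fun p => ?_⟩
  exact (hB _ ⟨cl_mem hαβ _, cl_mem (by linarith) _⟩).trans (Real.le_coe_toNNReal B)

lemma global_flow {F : ℝ × ℝ → ℝ × ℝ} {K B : ℝ≥0} (hK : LipschitzWith K F) (hB : ∀ p, ‖F p‖ ≤ B)
    (x : ℝ × ℝ) : ∃ φ : ℝ → ℝ × ℝ, φ 0 = x ∧ ∀ t, HasDerivAt φ (F (φ t)) t := by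
  have step : ∀ n : ℕ, ∃ φ : ℝ → ℝ × ℝ, φ 0 = x ∧
      ∀ t ∈ Ioo (-((n:ℝ) + 1)) (n + 1), HasDerivAt φ (F (φ t)) t := by
    intro n
    have h0 : (0:ℝ) ∈ Icc (-((n:ℝ) + 1)) (n + 1) := ⟨by linarith [n.cast_nonneg (α := ℝ)], by positivity⟩
    have hpl : IsPicardLindelof (fun _ => F) (⟨0, h0⟩ : Icc (-((n:ℝ) + 1)) (n + 1)) x
        (B * (n + 1)) 0 B K := by
      refine IsPicardLindelof.of_time_independent (fun p _ => hB p) hK.lipschitzOnWith ?_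
      simp
    obtain ⟨φ, h1, h2⟩ := hpl.exists_eq_forall_mem_Icc_hasDerivWithinAt₀
    exact ⟨φ, h1, fun t ht => (h2 t (Ioo_subset_Icc_self ht)).hasDerivAt (Icc_mem_nhds ht.1 ht.2)⟩
  choose φ h0 hφ using step
  have agree : ∀ n m : ℕ, n ≤ m → EqOn (φ n) (φ m) (Ioo (-((n:ℝ) + 1)) (n + 1)) := by
    intro n m hnm
    have hnm' : (n:ℝ) ≤ m := by exact_mod_cast hnm
    refine ODE_solution_unique_of_mem_Ioo (v := fun _ => F) (s := fun _ => univ) (K := K) (t₀ := 0)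
      (fun t _ => hK.lipschitzOnWith) ⟨by linarith [n.cast_nonneg (α := ℝ)], by positivity⟩
      (fun t ht => ⟨hφ n t ht, mem_univ _⟩)
      (fun t ht => ⟨hφ m t ⟨by linarith [ht.1], by linarith [ht.2]⟩, mem_univ _⟩) (by rw [h0, h0])
  have hN : ∀ t : ℝ, t ∈ Ioo (-((⌈|t|⌉₊:ℝ) + 1)) (⌈|t|⌉₊ + 1) := fun t => by
    have := Nat.le_ceil |t|
    have := abs_le.mp this
    constructor <;> linarith [this.1, this.2]
  refine ⟨fun t => φ ⌈|t|⌉₊ t, by simp [h0], fun t => ?_⟩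
  have : HasDerivAt (φ ⌈|t|⌉₊) (F (φ ⌈|t|⌉₊ t)) t := hφ _ t (hN t)
  refine this.congr_of_eventuallyEq ?_
  filter_upwards [Ioo_mem_nhds (hN t).1 (hN t).2] with s hs
  rcases le_total ⌈|s|⌉₊ ⌈|t|⌉₊ with h | h
  · exact agree _ _ h (hN s)
  · exact (agree _ _ h hs).symm

/-- clamped solution -/
def FS (A D : ℝ → ℝ) (α β M : ℝ) (u w : ℝ → ℝ) : Prop :=
  (∀ z, HasDerivAt u (cl (-M) M (w z)) z) ∧
  ∀ z, HasDerivAt w (A (cl α β (u z)) + D (cl α β (u z)) * cl (-M) M (w z)) z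

/-- solution -/
def Sol (A D : ℝ → ℝ) (u w : ℝ → ℝ) : Prop :=
  (∀ z, HasDerivAt u (w z) z) ∧ ∀ z, HasDerivAt w (A (u z) + D (u z) * w z) z

lemma FS.exists {A D : ℝ → ℝ} {α β M : ℝ} (hαβ : α ≤ β) (hM : 0 ≤ M) (hA : Lip A α β) (hD : Lip D α β)
    (x y : ℝ) : ∃ u w, FS A D α β M u w ∧ u 0 = x ∧ w 0 = y := by
  obtain ⟨K, hK⟩ := cf_lip hαβ hM hA hD
  obtain ⟨B, hB⟩ := cf_bdd hαβ hM hA hD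
  obtain ⟨φ, h0, hφ⟩ := global_flow hK hB (x, y)
  refine ⟨fun z => (φ z).1, fun z => (φ z).2, ⟨fun z => ?_, fun z => ?_⟩, by simp [h0], by simp [h0]⟩
  · exact (hasFDerivAt_fst.comp_hasDerivAt z (hφ z))
  · exact (hasFDerivAt_snd.comp_hasDerivAt z (hφ z))

lemma FS.unique {A D : ℝ → ℝ} {α β M t0 : ℝ} {u w u' w' : ℝ → ℝ}
    (hαβ : α ≤ β) (hM : 0 ≤ M) (hA : Lip A α β) (hD : Lip D α β)
    (h : FS A D α β M u w) (h' : FS A D α β M u' w') (e1 : u t0 = u' t0) (e2 : w t0 = w' t0) :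
    ∀ z, u z = u' z ∧ w z = w' z := by
  obtain ⟨K, hK⟩ := cf_lip hαβ hM hA hD
  have := ODE_solution_unique_univ (v := fun _ => CF A D α β M) (s := fun _ => univ) (K := K) (t₀ := t0)
    (f := fun z => (u z, w z)) (g := fun z => (u' z, w' z)) (fun t => hK.lipschitzOnWith)
    (fun t => ⟨(h.1 t).prodMk (h.2 t), mem_univ _⟩) (fun t => ⟨(h'.1 t).prodMk (h'.2 t), mem_univ _⟩)
    (by simp [e1, e2])
  intro z
  have := congrFun this z
  simpa using this

lemma FS.shift {A D : ℝ → ℝ} {α β M : ℝ} {u w : ℝ → ℝ} (h : FS A D α β M u w) (t : ℝ) :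
    FS A D α β M (fun z => u (z + t)) (fun z => w (z + t)) :=
  ⟨fun z => (h.1 (z + t)).comp_add_const z t, fun z => (h.2 (z + t)).comp_add_const z t⟩

lemma FS.reverse {A D : ℝ → ℝ} {α β M : ℝ} {u w : ℝ → ℝ} (hM : 0 ≤ M) (h : FS A D α β M u w) :
    FS A (fun u => -D u) α β M (fun z => u (-z)) (fun z => -w (-z)) := by
  have hc : ∀ x, cl (-M) M (-x) = -cl (-M) M x := fun x => by
    have := cl_neg (a := -M) (b := M) (by linarith) x
    rwa [neg_neg] at this
  refine ⟨fun z => ?_, fun z => ?_⟩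
  · rw [hc]
    exact ((h.1 (-z)).scomp z (hasDerivAt_neg z)).congr_deriv (by simp)
  · rw [hc]
    exact ((h.2 (-z)).scomp z (hasDerivAt_neg z)).neg.congr_deriv (by simp)

lemma FS.reflect {A D : ℝ → ℝ} {α β M : ℝ} {u w : ℝ → ℝ} (hαβ : α ≤ β) (h : FS A D α β M u w) :
    FS (fun v => -A (-v)) (fun v => -D (-v)) (-β) (-α) M (fun z => -u (-z)) (fun z => w (-z)) := by
  refine ⟨fun z => ?_, fun z => ?_⟩
  · exact ((h.1 (-z)).scomp z (hasDerivAt_neg z)).neg.congr_deriv (by simp)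
  · simp only [cl_neg hαβ, neg_neg]
    exact ((h.2 (-z)).scomp z (hasDerivAt_neg z)).congr_deriv (by simp; ring)

lemma FS.sol {A D : ℝ → ℝ} {α β M : ℝ} {u w : ℝ → ℝ} (h : FS A D α β M u w)
    (hu : ∀ z, u z ∈ Icc α β) (hw : ∀ z, w z ∈ Icc (-M) M) : Sol A D u w := by
  refine ⟨fun z => ?_, fun z => ?_⟩
  · have := h.1 z; rwa [cl_eq (hw z)] at this
  · have := h.2 z; rwa [cl_eq (hw z), cl_eq (hu z)] at this

lemma Sol.fs {A D : ℝ → ℝ} {α β M : ℝ} {u w : ℝ → ℝ} (h : Sol A D u w)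
    (hu : ∀ z, u z ∈ Icc α β) (hw : ∀ z, w z ∈ Icc (-M) M) : FS A D α β M u w := by
  refine ⟨fun z => ?_, fun z => ?_⟩
  · rw [cl_eq (hw z)]; exact h.1 z
  · rw [cl_eq (hw z), cl_eq (hu z)]; exact h.2 z

lemma Sol.reverse {A D : ℝ → ℝ} {u w : ℝ → ℝ} (h : Sol A D u w) :
    Sol A (fun u => -D u) (fun z => u (-z)) (fun z => -w (-z)) := by
  refine ⟨fun z => ?_, fun z => ?_⟩
  · exact ((h.1 (-z)).scomp z (hasDerivAt_neg z)).congr_deriv (by simp)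
  · exact ((h.2 (-z)).scomp z (hasDerivAt_neg z)).neg.congr_deriv (by simp)

lemma lim_deriv_zero {f f' : ℝ → ℝ} {l k : ℝ} (hf : Tendsto f atTop (𝓝 l))
    (hd : ∀ z, 0 ≤ z → HasDerivAt f (f' z) z) (hf' : Tendsto f' atTop (𝓝 k)) : k = 0 := by
  have ex : ∀ z : ℝ, ∃ ξ, z ≤ ξ ∧ (0 ≤ z → f' ξ = f (z + 1) - f z) := by
    intro z
    by_cases hz : 0 ≤ z
    · obtain ⟨ξ, h1, h2⟩ := exists_hasDerivAt_eq_slope f f' (show z < z + 1 by linarith)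
        (fun x hx => (hd x (by linarith [hx.1])).continuousAt.continuousWithinAt)
        (fun x hx => hd x (by linarith [hx.1]))
      exact ⟨ξ, h1.1.le, fun _ => by rw [h2]; simp⟩
    · exact ⟨z, le_rfl, fun h => absurd h hz⟩
  choose ξ h1 h2 using ex
  have t1 : Tendsto (fun z => f' (ξ z)) atTop (𝓝 k) :=
    hf'.comp (tendsto_atTop_mono h1 tendsto_id)
  have t2 : Tendsto (fun z => f (z + 1) - f z) atTop (𝓝 (l - l)) :=
    (hf.comp (tendsto_atTop_add_const_right _ 1 tendsto_id)).sub hf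
  rw [sub_self] at t2
  refine tendsto_nhds_unique t1 (t2.congr' ?_)
  filter_upwards [eventually_ge_atTop 0] with z hz using (h2 z hz).symm

lemma fwd_gronwall {A D q u w : ℝ → ℝ} {α β M a m Z : ℝ} (hA : Lip A α β)
    (h : Gr A D a m q) (ha : α ≤ a) (hm : m ≤ β) (hqM : ∀ u ∈ Icc a m, q u ≤ M)
    (hs : FS A D α β M u w) (hw0 : w 0 = q (u 0)) (hu : ∀ z ∈ Icc 0 Z, u z ∈ Ioo a m) :
    ∀ z ∈ Icc 0 Z, w z = q (u z) := by
  obtain ⟨KA, hA⟩ := hA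
  have cu : Continuous u := continuous_iff_continuousAt.mpr fun z => (hs.1 z).continuousAt
  have cw : Continuous w := continuous_iff_continuousAt.mpr fun z => (hs.2 z).continuousAt
  have mem : ∀ v ∈ Ioo a m, v ∈ Icc α β := fun v hv => ⟨by linarith [hv.1], by linarith [hv.2]⟩
  have cAu : ContinuousOn (fun z => A (u z)) (Icc 0 Z) :=
    hA.continuousOn.comp cu.continuousOn fun z hz => mem _ (hu z hz)
  have cqu : ContinuousOn (fun z => q (u z)) (Icc 0 Z) :=
    h.1.comp cu.continuousOn fun z hz => Ioo_subset_Icc_self (hu z hz)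
  obtain ⟨C, hC⟩ := isCompact_Icc.exists_bound_of_continuousOn
    (cAu.div cqu fun z hz => (h.2.1 _ (hu z hz)).ne')
  have := eq_zero_of_abs_deriv_le_mul_abs_self_of_eq_zero_right (f := fun z => w z - q (u z))
    (f' := fun z => (A (cl α β (u z)) + D (cl α β (u z)) * cl (-M) M (w z)) -
      (A (u z) / q (u z) + D (u z)) * cl (-M) M (w z)) (K := C) (a := 0) (b := Z)
    (cw.continuousOn.sub cqu) (fun z hz => ?_) (by simp [hw0]) (fun z hz => ?_)
  · intro z hz
    exact sub_eq_zero.mp (this z hz)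
  · have hz' := hu z (Ico_subset_Icc_self hz)
    exact ((hs.2 z).sub ((h.2.2 _ hz').comp z (hs.1 z))).hasDerivWithinAt
  · have hz' := hu z (Ico_subset_Icc_self hz)
    have hq := h.2.1 _ hz'
    have hqM' := hqM _ (Ioo_subset_Icc_self hz')
    rw [cl_eq (mem _ hz')]
    have e : A (u z) + D (u z) * cl (-M) M (w z) - (A (u z) / q (u z) + D (u z)) * cl (-M) M (w z)
        = A (u z) / q (u z) * (cl (-M) M (q (u z)) - cl (-M) M (w z)) := by
      rw [cl_eq (x := q (u z)) ⟨by linarith, hqM'⟩]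
      field_simp; ring
    rw [e, norm_mul]
    refine mul_le_mul (hC z (Ico_subset_Icc_self hz)) ?_ (norm_nonneg _)
      ((norm_nonneg _).trans (hC z (Ico_subset_Icc_self hz)))
    have := (cl_lip (-M) M).dist_le_mul (q (u z)) (w z)
    simp only [NNReal.coe_one, one_mul, Real.dist_eq] at this
    rw [Real.norm_eq_abs, Real.norm_eq_abs, abs_sub_comm (w z)]
    exact this

lemma fwd {A D q u w : ℝ → ℝ} {α β M a m : ℝ} (hαβ : α ≤ β) (hM : 0 ≤ M)
    (hA : Lip A α β) (hD : Lip D α β)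
    (h : Gr A D a m q) (hqm : q m = 0) (ha : α ≤ a) (hm : m ≤ β) (ham : a < m)
    (hqM : ∀ u ∈ Icc a m, q u ≤ M)
    (hs : FS A D α β M u w) (hu0 : u 0 ∈ Ioo a m) (hw0 : w 0 = q (u 0)) :
    (A m = 0 → (∀ z, 0 ≤ z → u z ∈ Ioo a m ∧ w z = q (u z)) ∧ Tendsto u atTop (𝓝 m) ∧
      Tendsto w atTop (𝓝 0)) ∧
    (A m ≠ 0 → ∃ T, 0 < T ∧ u T = m ∧ w T = 0 ∧ ∀ z ∈ Ico 0 T, u z ∈ Ioo a m ∧ w z = q (u z)) := by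
  have cu : Continuous u := continuous_iff_continuousAt.mpr fun z => (hs.1 z).continuousAt
  have cw : Continuous w := continuous_iff_continuousAt.mpr fun z => (hs.2 z).continuousAt
  have mem : ∀ v ∈ Ioo a m, v ∈ Icc α β := fun v hv => ⟨by linarith [hv.1], by linarith [hv.2]⟩
  by_cases hall : ∀ z, 0 ≤ z → u z ∈ Ioo a m
  · have hw : ∀ z, 0 ≤ z → w z = q (u z) := fun z hz =>
      fwd_gronwall hA h ha hm hqM hs hw0 (Z := z) (fun y hy => hall y hy.1) z ⟨hz, le_rfl⟩
    have hcl : ∀ z, 0 ≤ z → cl (-M) M (w z) = q (u z) := fun z hz => by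
      have h1 := h.2.1 _ (hall z hz)
      have h2 := hqM _ (Ioo_subset_Icc_self (hall z hz))
      rw [hw z hz, cl_eq ⟨by linarith, h2⟩]
    have hmono : MonotoneOn u (Ici 0) := by
      refine monotoneOn_of_deriv_nonneg (convex_Ici _) cu.continuousOn
        (fun z hz => (hs.1 z).differentiableAt.differentiableWithinAt) ?_
      intro z hz
      rw [interior_Ici] at hz
      rw [(hs.1 z).deriv, hcl z (le_of_lt hz)]
      exact (h.2.1 _ (hall z (le_of_lt hz))).le
    have hm' : Monotone (fun z => u (max z 0)) := fun x y hxy =>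
      hmono (le_max_right x 0) (le_max_right y 0) (max_le_max_right 0 hxy)
    have hbd : BddAbove (range (fun z => u (max z 0))) :=
      ⟨m, by rintro _ ⟨z, rfl⟩; exact (hall _ (le_max_right z 0)).2.le⟩
    obtain ⟨l, hl⟩ : ∃ l, Tendsto (fun z => u (max z 0)) atTop (𝓝 l) := ⟨_, tendsto_atTop_ciSup hm' hbd⟩
    have hul : Tendsto u atTop (𝓝 l) := by
      refine hl.congr' ?_
      filter_upwards [eventually_ge_atTop 0] with z hz
      rw [max_eq_left hz]
    have ev0 : ∀ᶠ z : ℝ in atTop, 0 ≤ z := eventually_ge_atTop 0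
    have hlm : l ≤ m := le_of_tendsto hul (ev0.mono fun z hz => (hall z hz).2.le)
    have hla : u 0 ≤ l := ge_of_tendsto hul (ev0.mono fun z hz => hmono self_mem_Ici hz hz)
    have hlI : l ∈ Icc a m := ⟨by linarith [hu0.1], hlm⟩
    have hqu : Tendsto (fun z => q (u z)) atTop (𝓝 (q l)) := by
      refine (h.1 l hlI).tendsto.comp (tendsto_nhdsWithin_iff.mpr ⟨hul, ?_⟩)
      exact ev0.mono fun z hz => Ioo_subset_Icc_self (hall z hz)
    have hql : q l = 0 := lim_deriv_zero hul (f' := fun z => q (u z))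
      (fun z hz => by have := hs.1 z; rwa [hcl z hz] at this) hqu
    have hlm2 : l = m := by
      by_contra hne
      have := h.2.1 l ⟨by linarith [hu0.1], lt_of_le_of_ne hlm hne⟩
      linarith
    subst hlm2
    have hw0' : Tendsto w atTop (𝓝 0) := by
      rw [← hql]
      exact hqu.congr' (ev0.mono fun z hz => (hw z hz).symm)
    have mI : l ∈ Icc α β := ⟨by linarith, hm⟩
    have hul' : Tendsto u atTop (𝓝[Icc α β] l) :=
      tendsto_nhdsWithin_iff.mpr ⟨hul, ev0.mono fun z hz => mem _ (hall z hz)⟩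
    obtain ⟨KA, hA⟩ := hA
    obtain ⟨KD, hD⟩ := hD
    have tA : Tendsto (fun z => A (u z)) atTop (𝓝 (A l)) := (hA.continuousOn l mI).tendsto.comp hul'
    have tD : Tendsto (fun z => D (u z)) atTop (𝓝 (D l)) := (hD.continuousOn l mI).tendsto.comp hul'
    have tt := tA.add (tD.mul hqu)
    rw [hql, mul_zero, add_zero] at tt
    have hAl : A l = 0 := lim_deriv_zero hw0' (f' := fun z => A (u z) + D (u z) * q (u z))
      (fun z hz => by have := hs.2 z; rwa [hcl z hz, cl_eq (mem _ (hall z hz))] at this) tt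
    exact ⟨fun _ => ⟨fun z hz => ⟨hall z hz, hw z hz⟩, hul, hw0'⟩, fun hne => absurd hAl hne⟩
  · push Not at hall
    obtain ⟨z1, hz1, hz1'⟩ := hall
    set S := Ici (0:ℝ) ∩ u ⁻¹' (Ioo a m)ᶜ with hS
    have hScl : IsClosed S := isClosed_Ici.inter (isOpen_Ioo.isClosed_compl.preimage cu)
    have hSb : BddBelow S := ⟨0, fun z hz => hz.1⟩
    have hT : sInf S ∈ S := hScl.csInf_mem ⟨z1, hz1, hz1'⟩ hSb
    set T := sInf S with hTdef
    have hT0 : 0 < T := by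
      refine lt_of_le_of_ne hT.1 fun he => ?_
      have := hT.2
      rw [← he] at this
      exact this hu0
    have hin : ∀ z ∈ Ico 0 T, u z ∈ Ioo a m := fun z hz => by
      by_contra hcon
      exact absurd (csInf_le hSb (show z ∈ S from ⟨hz.1, hcon⟩)) (not_le.mpr hz.2)
    have hw : ∀ z ∈ Ico 0 T, w z = q (u z) := fun z hz =>
      fwd_gronwall hA h ha hm hqM hs hw0 (Z := z)
        (fun y hy => hin y ⟨hy.1, lt_of_le_of_lt hy.2 hz.2⟩) z ⟨hz.1, le_rfl⟩
    have hcl : ∀ z ∈ Ico 0 T, cl (-M) M (w z) = q (u z) := fun z hz => by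
      have h1 := h.2.1 _ (hin z hz)
      have h2 := hqM _ (Ioo_subset_Icc_self (hin z hz))
      rw [hw z hz, cl_eq ⟨by linarith, h2⟩]
    have hmono : MonotoneOn u (Icc 0 T) := by
      refine monotoneOn_of_deriv_nonneg (convex_Icc _ _) cu.continuousOn
        (fun z hz => (hs.1 z).differentiableAt.differentiableWithinAt) ?_
      intro z hz
      rw [interior_Icc] at hz
      rw [(hs.1 z).deriv, hcl z (Ioo_subset_Ico_self hz)]
      exact (h.2.1 _ (hin z (Ioo_subset_Ico_self hz))).le
    have hIm : ∀ z ∈ Icc 0 T, u z ∈ Icc a m := by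
      have hc : IsClosed (u ⁻¹' Icc a m) := isClosed_Icc.preimage cu
      have h1 : Ico 0 T ⊆ u ⁻¹' Icc a m := fun z hz => ⟨(hin z hz).1.le, (hin z hz).2.le⟩
      have h2 := hc.closure_subset_iff.mpr h1
      rw [closure_Ico hT0.ne] at h2
      exact h2
    have huT : u T = m := by
      have h1 := hIm T ⟨hT0.le, le_rfl⟩
      have h2 := hmono ⟨le_rfl, hT0.le⟩ ⟨hT0.le, le_rfl⟩ hT0.le
      by_contra hne
      exact hT.2 ⟨by linarith [hu0.1], lt_of_le_of_ne h1.2 hne⟩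
    have hwT : w T = 0 := by
      have hc : IsClosed (Icc 0 T ∩ (fun z => w z - q (u z)) ⁻¹' {0}) :=
        (cw.continuousOn.sub (h.1.comp cu.continuousOn hIm)).preimage_isClosed_of_isClosed
          isClosed_Icc isClosed_singleton
      have h1 : Ico 0 T ⊆ Icc 0 T ∩ (fun z => w z - q (u z)) ⁻¹' {0} := fun z hz =>
        ⟨Ico_subset_Icc_self hz, by simp [hw z hz]⟩
      have h2 := hc.closure_subset_iff.mpr h1
      rw [closure_Ico hT0.ne] at h2
      have : w T - q (u T) = 0 := (h2 ⟨hT0.le, le_rfl⟩).2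
      rw [huT, hqm] at this
      linarith
    refine ⟨fun hAm => ?_, fun _ => ⟨T, hT0, huT, hwT, fun z hz => ⟨hin z hz, hw z hz⟩⟩⟩
    exfalso
    have hconst : FS A D α β M (fun _ => m) (fun _ => 0) := by
      have c0 : cl (-M) M 0 = 0 := cl_eq ⟨by linarith, hM⟩
      have cm : cl α β m = m := cl_eq ⟨by linarith, hm⟩
      refine ⟨fun z => ?_, fun z => ?_⟩
      · simp only [c0]; exact hasDerivAt_const _ _
      · simp only [c0, cm, hAm, mul_zero, add_zero]; exact hasDerivAt_const _ _
    have := (FS.unique hαβ hM hA hD hs hconst (t0 := T) huT hwT 0).1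
    linarith [hu0.2]

lemma bwd {A D q u w : ℝ → ℝ} {α β M a m : ℝ} (hαβ : α ≤ β) (hM : 0 ≤ M)
    (hA : Lip A α β) (hD : Lip D α β)
    (h : Gr A D a m q) (hqa : q a = 0) (ha : α ≤ a) (hm : m ≤ β) (ham : a < m)
    (hqM : ∀ u ∈ Icc a m, q u ≤ M)
    (hs : FS A D α β M u w) (hu0 : u 0 ∈ Ioo a m) (hw0 : w 0 = q (u 0)) (hAa : A a = 0) :
    (∀ z, z ≤ 0 → u z ∈ Ioo a m ∧ w z = q (u z)) ∧ Tendsto u atBot (𝓝 a) ∧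
      Tendsto w atBot (𝓝 0) := by
  have key := (fwd (neg_le_neg hαβ) hM hA.reflect hD.reflect h.reflect (by simpa using hqa)
    (neg_le_neg hm) (neg_le_neg ha) (neg_lt_neg ham)
    (fun v hv => hqM (-v) ⟨by linarith [hv.2], by linarith [hv.1]⟩) (hs.reflect hαβ)
    (by simp only [neg_zero]; exact ⟨by linarith [hu0.2], by linarith [hu0.1]⟩)
    (by simpa using hw0)).1 (by simp [hAa])
  obtain ⟨k1, k2, k3⟩ := key
  refine ⟨fun z hz => ?_, ?_, ?_⟩
  · have := k1 (-z) (by linarith)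
    simp only [neg_neg] at this
    exact ⟨⟨by linarith [this.1.2], by linarith [this.1.1]⟩, this.2⟩
  · have := (k2.comp tendsto_neg_atBot_atTop).neg
    simpa [Function.comp_def] using this
  · have := k3.comp tendsto_neg_atBot_atTop
    simpa [Function.comp_def] using this

lemma Gr.bdd {A D q : ℝ → ℝ} {a m : ℝ} (h : Gr A D a m q) : ∃ M, 0 ≤ M ∧ ∀ u ∈ Icc a m, q u ≤ M := by
  obtain ⟨C, hC⟩ := isCompact_Icc.exists_bound_of_continuousOn h.1
  exact ⟨|C|, abs_nonneg _, fun u hu => (le_abs_self _).trans ((hC u hu).trans (le_abs_self _))⟩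

lemma orbit_het {A D q : ℝ → ℝ} {α β a m : ℝ} (hA : Lip A α β) (hD : Lip D α β)
    (h : ZG A D a m q) (ha : α ≤ a) (hm : m ≤ β) (ham : a < m) (hAa : A a = 0) (hAm : A m = 0) :
    ∃ u w, Sol A D u w ∧ (∀ z, u z ∈ Ioo a m) ∧ HE1 a m u w := by
  have hαβ : α ≤ β := by linarith
  obtain ⟨M, hM, hqM⟩ := h.1.bdd
  obtain ⟨u, w, hs, e1, e2⟩ := FS.exists hαβ hM hA hD ((a + m) / 2) (q ((a + m) / 2))
  have hu0 : u 0 ∈ Ioo a m := by rw [e1]; constructor <;> linarith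
  have hw0 : w 0 = q (u 0) := by rw [e1, e2]
  obtain ⟨f1, f2, f3⟩ := (fwd hαβ hM hA hD h.1 h.2.2 ha hm ham hqM hs hu0 hw0).1 hAm
  obtain ⟨b1, b2, b3⟩ := bwd hαβ hM hA hD h.1 h.2.1 ha hm ham hqM hs hu0 hw0 hAa
  have hall : ∀ z, u z ∈ Ioo a m ∧ w z = q (u z) := fun z =>
    (le_total 0 z).elim (f1 z) (b1 z)
  refine ⟨u, w, hs.sol (fun z => ?_) (fun z => ?_), fun z => (hall z).1, b2, f2, b3, f3, fun z => ?_⟩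
  · have := (hall z).1; exact ⟨by linarith [this.1], by linarith [this.2]⟩
  · have h1 := hall z
    have h2 := h.1.2.1 _ h1.1
    have h3 := hqM _ (Ioo_subset_Icc_self h1.1)
    rw [h1.2]; exact ⟨by linarith, h3⟩
  · have h1 := hall z
    rw [h1.2]; exact h.1.2.1 _ h1.1

lemma orbit_half {A D q : ℝ → ℝ} {α β a m M : ℝ} (hA : Lip A α β) (hD : Lip D α β)
    (h : ZG A D a m q) (ha : α ≤ a) (hm : m ≤ β) (ham : a < m) (hAa : A a = 0) (hAm : A m ≠ 0)
    (hM : 0 ≤ M) (hqM : ∀ u ∈ Icc a m, q u ≤ M) :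
    ∃ u w, FS A D α β M u w ∧ u 0 = m ∧ w 0 = 0 ∧ (∀ z, z ≤ 0 → u z ∈ Ioc a m ∧ w z ∈ Icc (-M) M) ∧
      Tendsto u atBot (𝓝 a) ∧ Tendsto w atBot (𝓝 0) := by
  have hαβ : α ≤ β := by linarith
  obtain ⟨u, w, hs, e1, e2⟩ := FS.exists hαβ hM hA hD ((a + m) / 2) (q ((a + m) / 2))
  have hu0 : u 0 ∈ Ioo a m := by rw [e1]; constructor <;> linarith
  have hw0 : w 0 = q (u 0) := by rw [e1, e2]
  obtain ⟨T, hT, f1, f2, f3⟩ := (fwd hαβ hM hA hD h.1 h.2.2 ha hm ham hqM hs hu0 hw0).2 hAm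
  obtain ⟨b1, b2, b3⟩ := bwd hαβ hM hA hD h.1 h.2.1 ha hm ham hqM hs hu0 hw0 hAa
  have tt : Tendsto (fun z : ℝ => z + T) atBot atBot := tendsto_atBot_add_const_right _ T tendsto_id
  refine ⟨_, _, hs.shift T, by simpa using f1, by simpa using f2, fun z hz => ?_,
    b2.comp tt, b3.comp tt⟩
  have aux : u (z + T) ∈ Ioo a m ∧ w (z + T) = q (u (z + T)) →
      u (z + T) ∈ Ioc a m ∧ w (z + T) ∈ Icc (-M) M := by
    rintro ⟨h1, h2⟩
    have h3 := h.1.2.1 _ h1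
    have h4 := hqM _ (Ioo_subset_Icc_self h1)
    exact ⟨Ioo_subset_Ioc_self h1, by rw [h2]; exact ⟨by linarith, h4⟩⟩
  rcases le_total (z + T) 0 with h0 | h0
  · exact aux (b1 _ h0)
  · rcases hz.eq_or_lt with rfl | hz
    · simp only [zero_add, f1, f2]; exact ⟨⟨ham, le_rfl⟩, ⟨by linarith, hM⟩⟩
    · exact aux (f3 _ ⟨h0, by linarith⟩)

lemma orbit_ho {A D qp qm : ℝ → ℝ} {α β a m : ℝ} (hA : Lip A α β) (hD : Lip D α β)
    (hp : ZG A D a m qp) (hm' : ZG A (fun u => -D u) a m qm) (ha : α ≤ a) (hm : m ≤ β) (ham : a < m)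
    (hAa : A a = 0) (hAm : A m ≠ 0) :
    ∃ u w, Sol A D u w ∧ (∀ z, u z ∈ Ioc a m) ∧ HO a u w := by
  have hαβ : α ≤ β := by linarith
  obtain ⟨M1, hM1, hq1⟩ := hp.1.bdd
  obtain ⟨M2, hM2, hq2⟩ := hm'.1.bdd
  set M := max M1 M2 with hMdef
  have hM : 0 ≤ M := hM1.trans (le_max_left _ _)
  obtain ⟨u, w, hs, s1, s2, s3, s4, s5⟩ := orbit_half hA hD hp ha hm ham hAa hAm hM
    (fun v hv => (hq1 v hv).trans (le_max_left _ _))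
  obtain ⟨x, y, ht, t1, t2, t3, t4, t5⟩ := orbit_half hA hD.neg hm' ha hm ham hAa hAm hM
    (fun v hv => (hq2 v hv).trans (le_max_right _ _))
  have hr : FS A D α β M (fun z => x (-z)) (fun z => -y (-z)) := by
    have := ht.reverse hM
    simpa only [neg_neg] using this
  have eq := FS.unique hαβ hM hA hD hs hr (t0 := 0) (by simp [s1, t1]) (by simp [s2, t2])
  have hall : ∀ z, u z ∈ Ioc a m ∧ w z ∈ Icc (-M) M := fun z => by
    rcases le_total z 0 with h | h
    · exact s3 z h
    · rw [(eq z).1, (eq z).2]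
      have := t3 (-z) (by linarith)
      exact ⟨this.1, by linarith [this.2.2], by linarith [this.2.1]⟩
  refine ⟨u, w, hs.sol (fun z => ?_) (fun z => (hall z).2), fun z => (hall z).1, s4, ?_, s5, ?_, ?_⟩
  · have := (hall z).1; exact ⟨by linarith [this.1], by linarith [this.2]⟩
  · rw [show u = fun z => x (-z) from funext fun z => (eq z).1]
    exact t4.comp tendsto_neg_atTop_atBot
  · rw [show w = fun z => -y (-z) from funext fun z => (eq z).2]
    have := (t5.comp tendsto_neg_atTop_atBot).neg
    simpa [Function.comp_def] using this
  · intro hcon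
    have := (hcon 0).1
    linarith

lemma Sol.contu {A D u w : ℝ → ℝ} (hs : Sol A D u w) : Continuous u :=
  continuous_iff_continuousAt.mpr fun z => (hs.1 z).continuousAt

lemma Sol.contw {A D u w : ℝ → ℝ} (hs : Sol A D u w) : Continuous w :=
  continuous_iff_continuousAt.mpr fun z => (hs.2 z).continuousAt

lemma sol_graph {A D u w : ℝ → ℝ} {I : Set ℝ} {a b : ℝ} (hs : Sol A D u w) (hIc : Convex ℝ I)
    (hIo : IsOpen I) (hw : ∀ z ∈ I, 0 < w z) (himg : u '' I = Ioo a b) (hab : a < b)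
    (hl : ∀ ε > 0, ∃ z1 ∈ I, ∀ z ∈ I, z ≤ z1 → w z < ε)
    (hr : ∀ ε > 0, ∃ z1 ∈ I, ∀ z ∈ I, z1 ≤ z → w z < ε) : ∃ q, ZG A D a b q := by
  have hmono : StrictMonoOn u I := by
    refine strictMonoOn_of_deriv_pos hIc hs.contu.continuousOn ?_
    rw [hIo.interior_eq]
    intro z hz
    rw [(hs.1 z).deriv]; exact hw z hz
  set Z := Function.invFunOn u I with hZ
  have hex : ∀ v ∈ Ioo a b, ∃ z ∈ I, u z = v := fun v hv => by
    rw [← himg] at hv; exact hv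
  have Zm : ∀ v ∈ Ioo a b, Z v ∈ I := fun v hv => Function.invFunOn_mem (hex v hv)
  have Ze : ∀ v ∈ Ioo a b, u (Z v) = v := fun v hv => Function.invFunOn_eq (hex v hv)
  have um : ∀ z ∈ I, u z ∈ Ioo a b := fun z hz => by rw [← himg]; exact mem_image_of_mem u hz
  have Zu : ∀ z ∈ I, Z (u z) = z := fun z hz =>
    hmono.injOn (Zm _ (um z hz)) hz (Ze _ (um z hz))
  have Zmono : StrictMonoOn Z (Ioo a b) := fun x hx y hy hxy => by
    rw [← hmono.lt_iff_lt (Zm x hx) (Zm y hy), Ze x hx, Ze y hy]; exact hxy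
  have Zimg : Z '' Ioo a b = I := by
    ext z; constructor
    · rintro ⟨v, hv, rfl⟩; exact Zm v hv
    · intro hz; exact ⟨u z, um z hz, Zu z hz⟩
  have Zc : ∀ v ∈ Ioo a b, ContinuousAt Z v := fun v hv =>
    Zmono.continuousAt_of_image_mem_nhds (Ioo_mem_nhds hv.1 hv.2)
      (by rw [Zimg]; exact hIo.mem_nhds (Zm v hv))
  have Zd : ∀ v ∈ Ioo a b, HasDerivAt Z (w (Z v))⁻¹ v := fun v hv =>
    HasDerivAt.of_local_left_inverse (Zc v hv) (hs.1 _) (hw _ (Zm v hv)).ne'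
      (by filter_upwards [Ioo_mem_nhds hv.1 hv.2] with y hy using Ze y hy)
  classical
  set q : ℝ → ℝ := fun v => if v ∈ Ioo a b then w (Z v) else 0 with hq
  have qin : ∀ v ∈ Ioo a b, q v = w (Z v) := fun v hv => by simp only [hq]; rw [if_pos hv]
  have qa : q a = 0 := by simp [hq]
  have qb : q b = 0 := by simp [hq]
  have qd : ∀ v ∈ Ioo a b, HasDerivAt q (A v / q v + D v) v := by
    intro v hv
    have e := ((hs.2 (Z v)).comp v (Zd v hv))
    have e2 : HasDerivAt (w ∘ Z) (A v / q v + D v) v := by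
      refine e.congr_deriv ?_
      rw [Ze v hv, qin v hv]
      have := (hw _ (Zm v hv)).ne'
      field_simp
    refine e2.congr_of_eventuallyEq ?_
    filter_upwards [Ioo_mem_nhds hv.1 hv.2] with y hy using qin y hy
  have qnn : ∀ v, 0 ≤ q v := fun v => by
    by_cases hv : v ∈ Ioo a b
    · rw [qin v hv]; exact (hw _ (Zm v hv)).le
    · simp only [hq]; rw [if_neg hv]
  refine ⟨q, ⟨?_, fun v hv => by rw [qin v hv]; exact hw _ (Zm v hv), qd⟩, qa, qb⟩
  intro v hv
  rcases hv.1.eq_or_lt with rfl | h1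
  · rw [Metric.continuousWithinAt_iff]
    intro ε hε
    obtain ⟨z1, hz1, hz⟩ := hl ε hε
    refine ⟨u z1 - a, by linarith [(um z1 hz1).1], fun x hx hd => ?_⟩
    rw [qa, Real.dist_eq, sub_zero, abs_of_nonneg (qnn x)]
    by_cases hx' : x ∈ Ioo a b
    · rw [qin x hx']
      refine hz _ (Zm x hx') ?_
      rw [← hmono.le_iff_le (Zm x hx') hz1, Ze x hx']
      rw [Real.dist_eq] at hd
      have := (abs_lt.mp hd).2
      linarith
    · simp only [hq]; rw [if_neg hx']; exact hε
  · rcases hv.2.eq_or_lt with rfl | h2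
    · rw [Metric.continuousWithinAt_iff]
      intro ε hε
      obtain ⟨z1, hz1, hz⟩ := hr ε hε
      refine ⟨v - u z1, by linarith [(um z1 hz1).2], fun x hx hd => ?_⟩
      rw [qb, Real.dist_eq, sub_zero, abs_of_nonneg (qnn x)]
      by_cases hx' : x ∈ Ioo a v
      · rw [qin x hx']
        refine hz _ (Zm x hx') ?_
        rw [← hmono.le_iff_le hz1 (Zm x hx'), Ze x hx']
        rw [Real.dist_eq] at hd
        have := (abs_lt.mp hd).1
        linarith
      · simp only [hq]; rw [if_neg hx']; exact hε
    · exact (qd v ⟨h1, h2⟩).continuousAt.continuousWithinAt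

lemma he1_graph {A D u w : ℝ → ℝ} {a b : ℝ} (hs : Sol A D u w) (h : HE1 a b u w) :
    ∃ q, ZG A D a b q := by
  obtain ⟨h1, h2, h3, h4, h5⟩ := h
  have hmono : StrictMono u := strictMono_of_deriv_pos fun z => by rw [(hs.1 z).deriv]; exact h5 z
  have ha : ∀ z, a < u z := fun z =>
    (hmono.monotone.le_of_tendsto h1 (z - 1)).trans_lt (hmono (by linarith))
  have hb : ∀ z, u z < b := fun z =>
    (hmono (show z < z + 1 by linarith)).trans_le (hmono.monotone.ge_of_tendsto h2 (z + 1))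
  refine sol_graph hs convex_univ isOpen_univ (fun z _ => h5 z) ?_ ((ha 0).trans (hb 0)) ?_ ?_
  · ext v
    constructor
    · rintro ⟨z, _, rfl⟩; exact ⟨ha z, hb z⟩
    · intro hv
      obtain ⟨x, hx⟩ := (h1.eventually (gt_mem_nhds hv.1)).exists
      obtain ⟨y, hy⟩ := (h2.eventually (lt_mem_nhds hv.2)).exists
      obtain ⟨z, hz⟩ := mem_range_of_exists_le_of_exists_ge hs.contu ⟨x, hx.le⟩ ⟨y, hy.le⟩
      exact ⟨z, mem_univ _, hz⟩
  · intro ε hε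
    obtain ⟨z, hz⟩ := eventually_atBot.mp (h3.eventually (gt_mem_nhds hε))
    exact ⟨z, mem_univ _, fun y _ hy => hz y hy⟩
  · intro ε hε
    obtain ⟨z, hz⟩ := eventually_atTop.mp (h4.eventually (gt_mem_nhds hε))
    exact ⟨z, mem_univ _, fun y _ hy => hz y hy⟩

lemma half_graph {A D u w : ℝ → ℝ} {a m z0 : ℝ} (hs : Sol A D u w) (h1 : Tendsto u atBot (𝓝 a))
    (h3 : Tendsto w atBot (𝓝 0)) (hw : ∀ z < z0, 0 < w z) (e1 : u z0 = m) (e2 : w z0 = 0) :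
    a < m ∧ ∃ q, ZG A D a m q := by
  have hmono : StrictMonoOn u (Iic z0) := by
    refine strictMonoOn_of_deriv_pos (convex_Iic _) hs.contu.continuousOn ?_
    rw [interior_Iic]
    intro z hz
    rw [(hs.1 z).deriv]; exact hw z hz
  have ha : ∀ z ≤ z0, a < u z := by
    intro z hz
    have : a ≤ u (z - 1) := by
      refine le_of_tendsto h1 ?_
      filter_upwards [eventually_le_atBot (z - 1)] with y hy
      exact hmono.monotoneOn (show y ≤ z0 by linarith) (show z - 1 ≤ z0 by linarith) hy
    exact this.trans_lt (hmono (show z - 1 ≤ z0 by linarith) hz (by linarith))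
  have ham : a < m := by rw [← e1]; exact ha z0 le_rfl
  refine ⟨ham, sol_graph hs (convex_Iio z0) isOpen_Iio hw ?_ ham ?_ ?_⟩
  · ext v
    constructor
    · rintro ⟨z, hz, rfl⟩
      exact ⟨ha z (le_of_lt hz), by rw [← e1]; exact hmono (show z ≤ z0 from le_of_lt hz) (show z0 ≤ z0 from le_rfl) hz⟩
    · intro hv
      obtain ⟨x, hx, hx'⟩ := ((h1.eventually (gt_mem_nhds hv.1)).and (eventually_le_atBot z0)).exists
      obtain ⟨z, hz, hz'⟩ := intermediate_value_Icc hx' hs.contu.continuousOn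
        (show v ∈ Icc (u x) (u z0) from ⟨hx.le, by rw [e1]; exact hv.2.le⟩)
      refine ⟨z, lt_of_le_of_ne hz.2 ?_, hz'⟩
      rintro rfl
      rw [e1] at hz'; exact absurd hz'.symm hv.2.ne
  · intro ε hε
    obtain ⟨z, hz⟩ := eventually_atBot.mp (h3.eventually (gt_mem_nhds hε))
    exact ⟨min z (z0 - 1), show min z (z0 - 1) < z0 from (min_le_right _ _).trans_lt (by linarith),
      fun y _ hy => hz y (hy.trans (min_le_left _ _))⟩
  · intro ε hε
    have := hs.contw.continuousAt.eventually (show ∀ᶠ y in 𝓝 (w z0), y < ε from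
      gt_mem_nhds (by rw [e2]; exact hε))
    obtain ⟨δ, hδ, hh⟩ := Metric.eventually_nhds_iff.mp this
    refine ⟨z0 - δ / 2, show z0 - δ / 2 < z0 by linarith, fun y hy hy' => hh ?_⟩
    have hy1 : y < z0 := hy
    rw [Real.dist_eq, abs_lt]; constructor <;> linarith

lemma compact_ins {f : ℝ → ℝ} {l : ℝ} (hc : Continuous f) (h1 : Tendsto f atBot (𝓝 l))
    (h2 : Tendsto f atTop (𝓝 l)) : IsCompact (insert l (range f)) := by
  refine Filter.Tendsto.isCompact_insert_range_of_cocompact ?_ hc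
  rw [cocompact_eq_atBot_atTop]
  exact h1.sup h2

lemma bdd_lim {f : ℝ → ℝ} {l : ℝ} (hc : Continuous f) (h1 : Tendsto f atBot (𝓝 l))
    (h2 : Tendsto f atTop (𝓝 l)) : ∃ M, 0 < M ∧ ∀ z, |f z| ≤ M := by
  obtain ⟨M, hM⟩ := (compact_ins hc h1 h2).isBounded.exists_norm_le
  refine ⟨|M| + 1, by positivity, fun z => ?_⟩
  have := hM (f z) (mem_insert_of_mem _ (mem_range_self z))
  rw [Real.norm_eq_abs] at this
  linarith [le_abs_self M]

lemma exists_max {f : ℝ → ℝ} {l x : ℝ} (hc : Continuous f) (h1 : Tendsto f atBot (𝓝 l))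
    (h2 : Tendsto f atTop (𝓝 l)) (hx : l < f x) : ∃ z0, ∀ z, f z ≤ f z0 := by
  obtain ⟨m, hm, hm'⟩ := (compact_ins hc h1 h2).exists_isGreatest (insert_nonempty _ _)
  have hxm : f x ≤ m := hm' (mem_insert_of_mem _ (mem_range_self x))
  rcases hm with rfl | ⟨z0, rfl⟩
  · exact absurd hx (not_lt.2 hxm)
  · exact ⟨z0, fun z => hm' (mem_insert_of_mem _ (mem_range_self z))⟩

lemma inv_cont {u : ℝ → ℝ} {a b : ℝ} (hab : a ≤ b) (hc : ContinuousOn u (Icc a b)) 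
    (hm : StrictAntiOn u (Icc a b)) : ∃ Z : ℝ → ℝ, ContinuousOn Z (Icc (u b) (u a)) ∧
      ∀ v ∈ Icc (u b) (u a), Z v ∈ Icc a b ∧ u (Z v) = v := by
  set Z := Function.invFunOn u (Icc a b)
  have hex : ∀ v ∈ Icc (u b) (u a), ∃ z ∈ Icc a b, u z = v := fun v hv =>
    intermediate_value_Icc' hab hc hv
  have Zm : ∀ v ∈ Icc (u b) (u a), Z v ∈ Icc a b := fun v hv => Function.invFunOn_mem (hex v hv)
  have Ze : ∀ v ∈ Icc (u b) (u a), u (Z v) = v := fun v hv => Function.invFunOn_eq (hex v hv)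
  refine ⟨Z, ?_, fun v hv => ⟨Zm v hv, Ze v hv⟩⟩
  rw [continuousOn_iff_isClosed]
  intro t ht
  refine ⟨u '' (Icc a b ∩ t), ((isCompact_Icc.inter_right ht).image_of_continuousOn
    (hc.mono inter_subset_left)).isClosed, ?_⟩
  ext v
  constructor
  · rintro ⟨h1, h2⟩
    exact ⟨⟨Z v, ⟨Zm v h2, h1⟩, Ze v h2⟩, h2⟩
  · rintro ⟨⟨z, ⟨hz, hzt⟩, rfl⟩, h2⟩
    refine ⟨?_, h2⟩
    have : Z (u z) = z := hm.injOn (Zm _ h2) hz (Ze _ h2)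
    show Z (u z) ∈ t
    rwa [this]

lemma ev_neg {w : ℝ → ℝ} {d z0 : ℝ} (h : HasDerivAt w d z0) (h0 : w z0 = 0) (hd : d < 0) :
    ∃ δ > 0, ∀ z ∈ Ioc z0 (z0 + δ), w z < 0 := by
  have h1 := (hasDerivAt_iff_tendsto_slope.1 h).mono_left
    (nhdsWithin_mono z0 (show Ioi z0 ⊆ {z0}ᶜ from fun z hz => ne_of_gt hz))
  have h2 := h1.eventually (gt_mem_nhds hd)
  obtain ⟨x, hx, hx'⟩ := mem_nhdsGT_iff_exists_Ioc_subset.1 h2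
  refine ⟨x - z0, by simpa using hx, fun z hz => ?_⟩
  have h3 : slope w z0 z < 0 := hx' ⟨hz.1, by linarith [hz.2]⟩
  rw [slope_def_field, h0, sub_zero] at h3
  have hp : 0 < z - z0 := by linarith [hz.1]
  by_contra hcon
  push Not at hcon
  exact absurd h3 (not_lt.2 (div_nonneg hcon hp.le))

lemma down {u w : ℝ → ℝ} {d z0 : ℝ} (hu : ∀ z, HasDerivAt u (w z) z) (h : HasDerivAt w d z0)
    (h0 : w z0 = 0) (hd : d < 0) : ∃ δ > 0, ∀ z ∈ Ioc z0 (z0 + δ), w z < 0 ∧ u z < u z0 := by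
  obtain ⟨δ, hδ, H⟩ := ev_neg h h0 hd
  refine ⟨δ, hδ, fun z hz => ⟨H z hz, ?_⟩⟩
  have hanti : StrictAntiOn u (Icc z0 (z0 + δ)) := by
    refine strictAntiOn_of_deriv_neg (convex_Icc _ _)
      (fun x _ => (hu x).continuousAt.continuousWithinAt) ?_
    rw [interior_Icc]
    intro x hx
    rw [(hu x).deriv]; exact H x ⟨hx.1, hx.2.le⟩
  exact hanti ⟨le_rfl, by linarith⟩ ⟨hz.1.le, hz.2⟩ hz.1

lemma up {u w : ℝ → ℝ} {d z0 : ℝ} (hu : ∀ z, HasDerivAt u (w z) z) (h : HasDerivAt w d z0)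
    (h0 : w z0 = 0) (hd : 0 < d) : ∃ δ > 0, ∀ z ∈ Ioc z0 (z0 + δ), 0 < w z ∧ u z0 < u z := by
  obtain ⟨δ, hδ, H⟩ := down (u := fun z => -u z) (w := fun z => -w z) (fun z => (hu z).neg) h.neg
    (by simp [h0]) (by simpa using hd)
  exact ⟨δ, hδ, fun z hz => by have := H z hz; constructor <;> linarith [this.1, this.2]⟩

/-- No repeated points and no equilibria on a homoclinic orbit. -/
lemma ho_norep {A D u w : ℝ → ℝ} {a : ℝ} (hA : ∀ α β, 0 < α → Lip A α β)
    (hD : ∀ α β, 0 < α → Lip D α β) (ha : 0 < a) (hs : Sol A D u w) (hpos : ∀ z, 0 < u z)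
    (h : HO a u w) :
    (∀ s t, u s = u t → w s = w t → s = t) ∧ (∀ z, w z = 0 → A (u z) ≠ 0) := by
  obtain ⟨h1, h2, h3, h4, h5⟩ := h
  obtain ⟨β, hβ, Hβ⟩ := bdd_lim hs.contu h1 h2
  obtain ⟨M, hM, HM⟩ := bdd_lim hs.contw h3 h4
  obtain ⟨α, hα, Hα⟩ := bdd_lim (f := fun z => (u z)⁻¹) (hs.contu.inv₀ fun z => (hpos z).ne')
    (h1.inv₀ ha.ne') (h2.inv₀ ha.ne')
  have hu : ∀ z, u z ∈ Icc α⁻¹ β := fun z => by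
    refine ⟨?_, (abs_le.1 (Hβ z)).2⟩
    exact inv_le_of_inv_le₀ (hpos z) (abs_le.1 (Hα z)).2
  have hw : ∀ z, w z ∈ Icc (-M) M := fun z => abs_le.1 (HM z)
  have hfs := hs.fs hu hw
  have hαβ : α⁻¹ ≤ β := (hu 0).1.trans (hu 0).2
  have hLA := hA α⁻¹ β (by positivity)
  have hLD := hD α⁻¹ β (by positivity)
  constructor
  · have key : ∀ s t, s < t → u s = u t → w s = w t → False := by
      intro s t hst e1 e2
      have H := FS.unique (t0 := s) hαβ hM.le hLA hLD hfs (hfs.shift (t - s))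
        (by simpa using e1) (by simpa using e2)
      have Hn : ∀ (n : ℕ) z, u (z + n * (t - s)) = u z ∧ w (z + n * (t - s)) = w z := by
        intro n
        induction n with
        | zero => intro z; simp
        | succ n ih =>
          intro z
          have e : z + ((n + 1 : ℕ) : ℝ) * (t - s) = (z + (t - s)) + n * (t - s) := by push_cast; ring
          rw [e]
          exact ⟨(ih _).1.trans (H z).1.symm, (ih _).2.trans (H z).2.symm⟩
      have hl : ∀ z, Tendsto (fun n : ℕ => z + n * (t - s)) atTop atTop := fun z =>
        tendsto_atTop_add_const_left _ _
          ((tendsto_natCast_atTop_atTop).atTop_mul_const (sub_pos.2 hst))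
      refine h5 fun z => ⟨?_, ?_⟩
      · have := h2.comp (hl z)
        refine tendsto_nhds_unique (tendsto_const_nhds.congr fun n => ((Hn n z).1).symm) this
      · have := h4.comp (hl z)
        refine tendsto_nhds_unique (tendsto_const_nhds.congr fun n => ((Hn n z).2).symm) this
    intro s t e1 e2
    rcases lt_trichotomy s t with hl | hl | hl
    · exact (key s t hl e1 e2).elim
    · exact hl
    · exact (key t s hl e1.symm e2.symm).elim
  · intro z0 e1 e2
    have hcs : Sol A D (fun _ => u z0) (fun _ => 0) :=
      ⟨fun z => hasDerivAt_const _ _, fun z => (hasDerivAt_const _ _).congr_deriv (by simp [e2])⟩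
    have H := FS.unique (t0 := z0) hαβ hM.le hLA hLD hfs
      (hcs.fs (fun _ => hu z0) (fun _ => ⟨by linarith, hM.le⟩)) rfl e1
    have : u z0 = a := tendsto_nhds_unique (tendsto_const_nhds.congr fun z => ((H z).1).symm) h2
    exact h5 fun z => ⟨(H z).1.trans this, (H z).2⟩

lemma ho_gt {A D u w : ℝ → ℝ} {a : ℝ} (hs : Sol A D u w) (hpos : ∀ z, 0 < u z)
    (h : HO a u w) (hne : ∀ z, w z = 0 → A (u z) ≠ 0) (hA1 : ∀ v ∈ Ioo 0 a, A v < 0) (hAa : A a = 0) :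
    ∀ z, a < u z := by
  obtain ⟨h1, h2, h3, h4, h5⟩ := h
  have hge : ∀ z, a ≤ u z := by
    by_contra hcon
    push Not at hcon
    obtain ⟨x, hx⟩ := hcon
    obtain ⟨z0, hz0⟩ := exists_max (f := fun z => -u z) hs.contu.neg h1.neg h2.neg (neg_lt_neg hx)
    have hz0' : ∀ z, u z0 ≤ u z := fun z => neg_le_neg_iff.1 (hz0 z)
    have hw0 : w z0 = 0 := (show IsLocalMin u z0 from Eventually.of_forall hz0').hasDerivAt_eq_zero (hs.1 z0)
    have hd := hs.2 z0
    rw [hw0] at hd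
    obtain ⟨δ, hδ, H⟩ := down hs.1 hd hw0 (by
      simpa using hA1 _ ⟨hpos z0, (hz0' x).trans_lt hx⟩)
    exact absurd (H (z0 + δ) ⟨by linarith, le_rfl⟩).2 (not_lt.2 (hz0' _))
  intro z
  refine lt_of_le_of_ne (hge z) fun e => ?_
  have hw0 : w z = 0 := (show IsLocalMin u z from
    Eventually.of_forall fun y => by rw [← e]; exact hge y).hasDerivAt_eq_zero (hs.1 z)
  exact hne z hw0 (by rw [← e]; exact hAa)

/-- after the maximum the orbit decreases -/
lemma ho_desc {A D u w : ℝ → ℝ} {u1 u0 u2 z0 : ℝ} (hs : Sol A D u w)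
    (h2 : Tendsto u atTop (𝓝 u1))
    (hinj : ∀ s t, u s = u t → w s = w t → s = t)
    (hne : ∀ z, w z = 0 → A (u z) ≠ 0) (hgt : ∀ z, u1 < u z)
    (hA2 : ∀ v ∈ Ioo u0 u2, A v < 0) (hmax : ∀ z, u z ≤ u z0) (hw0 : w z0 = 0)
    (hm : u z0 ∈ Ioo u0 u2) (hA0 : A u0 = 0) : ∀ z > z0, w z < 0 := by
  have hsign : ∀ x y, w x < 0 → (∀ z ∈ uIcc x y, w z ≠ 0) → w y < 0 := by
    intro x y hx hz
    by_contra hcon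
    push Not at hcon
    obtain ⟨z, hz1, hz2⟩ := intermediate_value_uIcc (a := x) (b := y) hs.contw.continuousOn
      (show (0:ℝ) ∈ uIcc (w x) (w y) from by rw [uIcc_of_le (hx.le.trans hcon)]; exact ⟨hx.le, hcon⟩)
    exact hz z hz1 hz2
  by_contra hcon
  push Not at hcon
  obtain ⟨p, hp, hwp⟩ := hcon
  have hd0 := hs.2 z0
  rw [hw0] at hd0
  obtain ⟨δ, hδ, Hδ⟩ := down hs.1 hd0 hw0 (by simpa using hA2 _ hm)
  -- first zero
  have hδp : z0 + δ < p := by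
    by_contra hc; push Not at hc
    exact absurd (Hδ p ⟨hp, hc⟩).1 (not_lt.2 hwp)
  have hwδ := (Hδ (z0 + δ) ⟨by linarith, le_rfl⟩).1
  obtain ⟨zp, ⟨⟨hzp1, hzp2⟩, hwzp⟩, hzp3⟩ := (isCompact_Icc.inter_right
    (isClosed_singleton.preimage hs.contw) : IsCompact (Icc (z0 + δ) p ∩ w ⁻¹' {0})).exists_isLeast (by
      obtain ⟨z, hz, hz'⟩ := intermediate_value_Icc hδp.le hs.contw.continuousOn
        (show (0:ℝ) ∈ Icc (w (z0 + δ)) (w p) from ⟨hwδ.le, hwp⟩)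
      exact ⟨z, hz, hz'⟩)
  have hwzp : w zp = 0 := hwzp
  have hzpl : z0 + δ < zp := lt_of_le_of_ne hzp1 fun e => by rw [e, hwzp] at hwδ; exact lt_irrefl _ hwδ
  have hwn : ∀ z ∈ Ioo z0 zp, w z < 0 := by
    intro z hz
    rcases le_total z (z0 + δ) with hl | hl
    · exact (Hδ z ⟨hz.1, hl⟩).1
    · refine hsign (z0 + δ) z hwδ fun y hy e => ?_
      rw [uIcc_of_le hl] at hy
      have := hzp3 ⟨⟨hy.1, by linarith [hy.2, hz.2]⟩, e⟩
      linarith [hy.2, hz.2]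
  have hanti : StrictAntiOn u (Icc z0 zp) := by
    refine strictAntiOn_of_deriv_neg (convex_Icc _ _) hs.contu.continuousOn ?_
    rw [interior_Icc]
    intro x hx
    rw [(hs.1 x).deriv]; exact hwn x hx
  have hz0p : z0 < zp := by linarith
  have hbm : u zp < u z0 := hanti ⟨le_rfl, hz0p.le⟩ ⟨hz0p.le, le_rfl⟩ hz0p
  -- w' (zp) > 0
  have hdp := hs.2 zp
  rw [hwzp] at hdp
  have hdp' : HasDerivAt w (A (u zp)) zp := hdp.congr_deriv (by ring)
  have hAp : 0 < A (u zp) := by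
    refine lt_of_le_of_ne ?_ (hne zp hwzp).symm
    by_contra hc; push Not at hc
    -- reverse time : w > 0 just before zp
    have hr : HasDerivAt (fun z => -w (-z)) (A (u zp)) (-zp) := by
      have h0 : HasDerivAt w (A (u zp)) (-(-zp)) := by rwa [neg_neg]
      exact ((h0.scomp (-zp) (hasDerivAt_neg (-zp))).neg).congr_deriv (by simp)
    obtain ⟨η, hη, Hη⟩ := ev_neg hr (by simp [hwzp]) hc
    have hε : 0 < min η (zp - z0) := lt_min hη (by linarith)
    have k1 := Hη (-zp + min η (zp - z0) / 2) ⟨by linarith, by linarith [min_le_left η (zp - z0)]⟩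
    have k2 := hwn (zp - min η (zp - z0) / 2) ⟨by linarith [min_le_right η (zp - z0)], by linarith⟩
    rw [show -(-zp + min η (zp - z0) / 2) = zp - min η (zp - z0) / 2 by ring] at k1
    linarith
  obtain ⟨η, hη, Hη⟩ := up hs.1 hdp' hwzp hAp
  -- last time u = b
  obtain ⟨T, hT⟩ := eventually_atTop.1 ((h2.eventually (gt_mem_nhds (hgt zp))).and
    (eventually_ge_atTop (zp + η)))
  have hT1 : zp + η ≤ T := (hT T le_rfl).2
  have hT2 : ∀ z ≥ T, u z < u zp := fun z hz => (hT z hz).1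
  have huη := (Hη (zp + η) ⟨by linarith, le_rfl⟩).2
  obtain ⟨z3, ⟨⟨hz31, hz32⟩, hu3⟩, hz33⟩ := (isCompact_Icc.inter_right
    (isClosed_singleton.preimage hs.contu) : IsCompact (Icc (zp + η) T ∩ u ⁻¹' {u zp})).exists_isGreatest (by
      obtain ⟨z, hz, hz'⟩ := intermediate_value_Icc' hT1 hs.contu.continuousOn
        (show u zp ∈ Icc (u T) (u (zp + η)) from ⟨(hT2 T le_rfl).le, huη.le⟩)
      exact ⟨z, hz, hz'⟩)
  have hu3 : u z3 = u zp := hu3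
  have hafter : ∀ z > z3, u z < u zp := by
    intro z hz
    by_contra hc; push Not at hc
    have hzT : z ≤ T := by
      by_contra hc'; push Not at hc'
      exact absurd (hT2 z hc'.le) (not_lt.2 hc)
    obtain ⟨y, hy, hy'⟩ := intermediate_value_Icc' hzT hs.contu.continuousOn
      (show u zp ∈ Icc (u T) (u z) from ⟨(hT2 T le_rfl).le, hc⟩)
    have := hz33 ⟨⟨by linarith [hy.1], hy.2⟩, hy'⟩
    linarith [hy.1]
  have hzp_lt3 : zp < z3 := by linarith
  have hw3 : w z3 < 0 := by
    refine lt_of_le_of_ne ?_ fun e => ?_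
    · by_contra hc; push Not at hc
      have hev := (hs.contw.tendsto z3).eventually (lt_mem_nhds hc)
      obtain ⟨e, he, He⟩ := Metric.eventually_nhds_iff.1 hev
      have hmono : StrictMonoOn u (Icc z3 (z3 + e / 2)) := by
        refine strictMonoOn_of_deriv_pos (convex_Icc _ _) hs.contu.continuousOn ?_
        rw [interior_Icc]
        intro x hx
        rw [(hs.1 x).deriv]
        refine He ?_
        rw [Real.dist_eq, abs_lt]; constructor <;> linarith [hx.1, hx.2]
      have := hmono ⟨le_rfl, by linarith⟩ ⟨by linarith, le_rfl⟩ (show z3 < z3 + e / 2 by linarith)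
      linarith [hafter (z3 + e / 2) (by linarith)]
    · exact hzp_lt3.ne' (hinj _ _ hu3 (by rw [e, hwzp]))
  -- last zero of w before z3
  obtain ⟨z2, ⟨⟨hz21, hz22⟩, hw2⟩, hz23⟩ := (isCompact_Icc.inter_right
    (isClosed_singleton.preimage hs.contw) : IsCompact (Icc zp z3 ∩ w ⁻¹' {0})).exists_isGreatest
      ⟨zp, ⟨le_rfl, hzp_lt3.le⟩, hwzp⟩
  have hw2 : w z2 = 0 := hw2
  have hz2l : z2 < z3 := lt_of_le_of_ne hz22 fun e => by rw [← e, hw2] at hw3; exact lt_irrefl _ hw3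
  have hwn2 : ∀ z ∈ Ioc z2 z3, w z < 0 := by
    intro z hz
    refine hsign z3 z hw3 fun y hy e => ?_
    rw [uIcc_of_ge hz.2] at hy
    have := hz23 ⟨⟨by linarith [hy.1, hz.1], hy.2⟩, e⟩
    linarith [hy.1, hz.1]
  have hanti2 : StrictAntiOn u (Icc z2 z3) := by
    refine strictAntiOn_of_deriv_neg (convex_Icc _ _) hs.contu.continuousOn ?_
    rw [interior_Icc]
    intro x hx
    rw [(hs.1 x).deriv]; exact hwn2 x ⟨hx.1, hx.2.le⟩
  obtain ⟨Z, Zc, HZ⟩ := inv_cont hz0p.le hs.contu.continuousOn hanti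
  have hmaps : MapsTo u (Icc z2 z3) (Icc (u zp) (u z0)) := by
    intro z hz
    refine ⟨?_, hmax z⟩
    rw [← hu3]
    exact hanti2.antitoneOn hz ⟨hz2l.le, le_rfl⟩ hz.2
  have hψc : ContinuousOn (fun z => w z - w (Z (u z))) (Icc z2 z3) :=
    hs.contw.continuousOn.sub (hs.contw.comp_continuousOn (Zc.comp hs.contu.continuousOn hmaps))
  have hb2 : u zp < u z2 := by
    rw [← hu3]; exact hanti2 ⟨le_rfl, hz2l.le⟩ ⟨hz2l.le, le_rfl⟩ hz2l
  have e3 : Z (u z3) = zp := by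
    have := HZ (u z3) (hmaps ⟨hz2l.le, le_rfl⟩)
    exact hanti.injOn this.1 ⟨hz0p.le, le_rfl⟩ (this.2.trans hu3)
  have h2m := HZ (u z2) (hmaps ⟨le_rfl, hz2l.le⟩)
  have hZ2 : w (Z (u z2)) < 0 := by
    refine hwn _ ⟨lt_of_le_of_ne h2m.1.1 fun e => ?_, lt_of_le_of_ne h2m.1.2 fun e => ?_⟩
    · have := hinj z0 z2 (by rw [e, h2m.2]) (by rw [hw0, hw2])
      linarith
    · have := h2m.2
      rw [e] at this; linarith
  obtain ⟨z, hz, hz'⟩ := intermediate_value_Icc' hz2l.le hψc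
    (show (0:ℝ) ∈ Icc (w z3 - w (Z (u z3))) (w z2 - w (Z (u z2))) from
      ⟨by rw [e3, hwzp]; linarith, by rw [hw2]; linarith⟩)
  have hZz := HZ (u z) (hmaps hz)
  have := hinj z (Z (u z)) hZz.2.symm (by simpa [sub_eq_zero] using hz')
  have hzz : zp < z := lt_of_le_of_ne (hz21.trans hz.1) fun e => by
    have e2 : z2 = zp := le_antisymm (by rw [e]; exact hz.1) hz21
    rw [e2] at hb2; exact lt_irrefl _ hb2
  linarith [hZz.1.2]

lemma ho_graph {A D u w : ℝ → ℝ} {u1 u0 u2 : ℝ} (hA : ∀ α β, 0 < α → Lip A α β)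
    (hD : ∀ α β, 0 < α → Lip D α β) (h1p : 0 < u1)  (hA1 : ∀ v ∈ Ioo 0 u1, A v < 0)
    (hA2 : ∀ v ∈ Ioo u1 u0, 0 < A v) (hA3 : ∀ v ∈ Ioo u0 u2, A v < 0) (hA4 : ∀ v, u2 < v → 0 < A v)
    (e1 : A u1 = 0) (e0 : A u0 = 0) (e2 : A u2 = 0)
    (hs : Sol A D u w) (hpos : ∀ z, 0 < u z) (h : HO u1 u w) :
    ∃ m ∈ Ioo u0 u2, ∃ qp qm, ZG A D u1 m qp ∧ ZG A (fun u => -D u) u1 m qm := by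
  obtain ⟨hinj, hne⟩ := ho_norep hA hD h1p hs hpos h
  have hgt := ho_gt hs hpos h hne hA1 e1
  have h' := h
  obtain ⟨h1, h2, h3, h4, h5⟩ := h
  obtain ⟨z0, hz0⟩ := exists_max hs.contu h1 h2 (hgt 0)
  have hw0 : w z0 = 0 := (show IsLocalMax u z0 from Eventually.of_forall hz0).hasDerivAt_eq_zero (hs.1 z0)
  have hm : u z0 ∈ Ioo u0 u2 := by
    have hn : A (u z0) < 0 := by
      refine lt_of_le_of_ne ?_ (hne z0 hw0)
      by_contra hc; push Not at hc
      have hd := hs.2 z0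
      rw [hw0] at hd
      obtain ⟨δ, hδ, H⟩ := up hs.1 hd hw0 (by simpa using hc)
      exact absurd (H (z0 + δ) ⟨by linarith, le_rfl⟩).2 (not_lt.2 (hz0 _))
    constructor
    · by_contra hc; push Not at hc
      rcases hc.lt_or_eq with hc | hc
      · exact absurd hn (not_lt.2 (hA2 _ ⟨hgt z0, hc⟩).le)
      · rw [hc, e0] at hn; exact lt_irrefl _ hn
    · by_contra hc; push Not at hc
      rcases hc.lt_or_eq with hc | hc
      · exact absurd hn (not_lt.2 (hA4 _ hc).le)
      · rw [← hc, e2] at hn; exact lt_irrefl _ hn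
  have hdesc := ho_desc hs h2 hinj hne hgt hA3 hz0 hw0 hm e0
  have hsr := hs.reverse
  have hdesc' := ho_desc (u0 := u0) (u1 := u1) (u2 := u2) (z0 := -z0) hsr
    (h1.comp tendsto_neg_atTop_atBot)
    (fun s t a b => neg_injective (hinj _ _ a (neg_injective b)))
    (fun z hz => hne _ (by simpa using hz)) (fun z => hgt _) hA3 (fun z => by simpa using hz0 (-z))
    (by simp [hw0]) (by simpa using hm) e0
  obtain ⟨-, qp, hqp⟩ := half_graph (z0 := z0) hs h1 h3 (fun z hz => by
    have := hdesc' (-z) (by linarith)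
    simp only [neg_neg] at this
    linarith) rfl hw0
  obtain ⟨-, qm, hqm⟩ := half_graph (z0 := -z0) (m := u z0) hsr
    (h2.comp tendsto_neg_atBot_atTop) (by simpa using (h4.comp tendsto_neg_atBot_atTop).neg)
    (fun z hz => by
      have := hdesc (-z) (by linarith)
      linarith) (by simp) (by simp [hw0])
  exact ⟨u z0, hm, qp, qm, hqp, hqm⟩

lemma cd1 {f f' : ℝ → ℝ} (h : ∀ u ∈ Ioi (0:ℝ), HasDerivAt f (f' u) u) (hc : ContinuousOn f' (Ioi 0)) :
    ContDiffOn ℝ 1 f (Ioi 0) := by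
  rw [contDiffOn_one_iff_derivWithin isOpen_Ioi.uniqueDiffOn]
  refine ⟨fun u hu => (h u hu).differentiableAt.differentiableWithinAt, hc.congr fun u hu => ?_⟩
  rw [derivWithin_of_isOpen isOpen_Ioi hu, (h u hu).deriv]

lemma lip_of {f : ℝ → ℝ} (h : ContDiffOn ℝ 1 f (Ioi 0)) (α β : ℝ) (hα : 0 < α) : Lip f α β :=
  (h.mono fun _ hx => lt_of_lt_of_le hα hx.1).exists_lipschitzOnWith one_ne_zero (convex_Icc _ _)
    isCompact_Icc

lemma A1.dV {V V' V'' : ℝ → ℝ} {UM : ℝ} (h : A1 V V' V'' UM) {u : ℝ} (hu : 0 < u) :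
    HasDerivAt V (V' u) u := (h.1 u hu.le).hasDerivAt (Ici_mem_nhds hu)

lemma A1.cV {V V' V'' : ℝ → ℝ} {UM : ℝ} (h : A1 V V' V'' UM) : ContinuousOn V (Ici 0) :=
  fun u hu => (h.1 u hu).continuousWithinAt

lemma A1.V0 {V V' V'' : ℝ → ℝ} {UM : ℝ} (h : A1 V V' V'' UM) : 0 ≤ V' 0 := by
  have h1 : Tendsto V' (𝓝[>] 0) (𝓝 (V' 0)) :=
    (h.2.1 0 (show (0:ℝ) ≤ 0 from le_rfl)).mono_left (nhdsWithin_mono _ Ioi_subset_Ici_self)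
  exact ge_of_tendsto h1 (by filter_upwards [self_mem_nhdsWithin] with u hu using (h.2.2.2.2.1 u hu).le)

lemma A1.inj {V V' V'' : ℝ → ℝ} {UM : ℝ} (h : A1 V V' V'' UM) {a b : ℝ} (ha : 0 ≤ a) (hab : a < b)
    (hn : UM ∉ Ioo a b) : V' a ≠ V' b := by
  intro e
  obtain ⟨c, hc, hc'⟩ := exists_hasDerivAt_eq_zero hab
    (h.2.1.mono fun x hx => ha.trans hx.1) e (fun x hx => h.2.2.1 x (lt_of_le_of_lt ha hx.1))
  have := (h.2.2.2.2.2.2.2.2.2 c (lt_of_le_of_lt ha hc.1)).1 hc'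
  rw [this] at hc
  exact hn hc

lemma injOn_of_lt {f : ℝ → ℝ} {s : Set ℝ} (h : ∀ a ∈ s, ∀ b ∈ s, a < b → f a ≠ f b) : InjOn f s := by
  intro a ha b hb e
  by_contra hne
  rcases lt_or_gt_of_ne hne with hl | hl
  · exact h a ha b hb hl e
  · exact h b hb a ha hl e.symm

lemma A1.mono {V V' V'' : ℝ → ℝ} {UM : ℝ} (h : A1 V V' V'' UM) (hK : V' 0 ≤ V' UM) :
    StrictMonoOn V' (Icc 0 UM) :=
  ContinuousOn.strictMonoOn_of_injOn_Icc h.2.2.2.2.2.2.2.1.le hK (h.2.1.mono fun _ hx => hx.1)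
    (injOn_of_lt fun a ha b hb hab => h.inj ha.1 hab fun hh => by linarith [hh.2, hb.2])

lemma A1.anti {V V' V'' : ℝ → ℝ} {UM : ℝ} (h : A1 V V' V'' UM) {a b : ℝ} (ha : UM ≤ a) (hab : a < b) :
    V' b < V' a := by
  have hU := h.2.2.2.2.2.2.2.1
  have : StrictAntiOn V' (Icc UM b) :=
    ContinuousOn.strictAntiOn_of_injOn_Icc (by linarith) (h.2.2.2.2.2.2.2.2.1 b (by linarith))
      (h.2.1.mono fun _ hx => hU.le.trans hx.1)
    (injOn_of_lt fun a ha b hb hab => h.inj (hU.le.trans ha.1) hab fun hh => by linarith [hh.1, ha.1])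
  exact this ⟨ha, hab.le⟩ ⟨by linarith, le_rfl⟩ hab

/-- location of zeros and sign of `f`. -/
lemma f_signs {V V' V'' : ℝ → ℝ} {UM K c : ℝ} {uMx umx : ℝ → ℝ}
    (hA1 : A1 V V' V'' UM) (huMx : UMaxHyp V' UM uMx) (humx : UMinHyp V' UM umx)
    (hD1 : (K, c) ∈ D1 V V' UM uMx umx)
    {u1 u0 u2 : ℝ} (hz : ZerosD1 V K c u1 u0 u2) :
    (∀ v ∈ Ioo 0 u1, fTV V K c v < 0) ∧ (∀ v ∈ Ioo u1 u0, 0 < fTV V K c v) ∧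
    (∀ v ∈ Ioo u0 u2, fTV V K c v < 0) ∧ (∀ v, u2 < v → 0 < fTV V K c v) ∧ fdTV V' K u0 < 0 := by
  obtain ⟨hK0, hKM, hc1, hcM⟩ := hD1
  simp only at hK0 hKM hc1 hcM
  obtain ⟨hu1, h10, h02, z1, z0, z2, -⟩ := hz
  have hKp : 0 < K := hA1.V0.trans_lt hK0
  obtain ⟨⟨hM0, hMU⟩, hMK⟩ := huMx K hK0 hKM
  obtain ⟨hmU, hmK⟩ := humx K hKp hKM
  have hcm : cmf V umx K < c := (le_max_right _ _).trans_lt hc1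
  unfold cmf at hcm
  unfold cMf at hcM
  set p := uMx K
  set q := umx K
  have hmono := hA1.mono (hK0.le.trans hKM.le)
  have hc : ContinuousOn (fTV V K c) (Ici 0) :=
    (((continuousOn_const.mul continuousOn_id).sub hA1.cV).sub continuousOn_const).div_const K
  have hd : ∀ u, 0 < u → HasDerivAt (fTV V K c) (fdTV V' K u) u := fun u hu =>
    (((((hasDerivAt_id u).const_mul K).sub (hA1.dV hu)).sub_const c).div_const K).congr_deriv
      (by simp [fdTV])
  have hfM : 0 < fTV V K c p := div_pos (by linarith) hKp
  have hfm : fTV V K c q < 0 := div_neg_of_neg_of_pos (by linarith) hKp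
  have hpq : p < q := by linarith
  have d1 : ∀ u ∈ Ioo 0 p, 0 < fdTV V' K u := fun u hu => by
    have := hmono ⟨hu.1.le, by linarith [hu.2]⟩ ⟨hM0.le, hMU.le⟩ hu.2
    exact div_pos (by linarith) hKp
  have d2 : ∀ u ∈ Ioo p q, fdTV V' K u < 0 := fun u hu => by
    have : K < V' u := by
      rcases le_total u UM with hl | hl
      · rw [← hMK]; exact hmono ⟨hM0.le, hMU.le⟩ ⟨by linarith [hu.1], hl⟩ hu.1
      · rw [← hmK]; exact hA1.anti hl hu.2
    exact div_neg_of_neg_of_pos (by linarith) hKp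
  have d3 : ∀ u ∈ Ioi q, 0 < fdTV V' K u := fun u hu => by
    have := hA1.anti hmU.le hu
    exact div_pos (by linarith) hKp
  have m1 : StrictMonoOn (fTV V K c) (Icc 0 p) := by
    refine strictMonoOn_of_deriv_pos (convex_Icc _ _) (hc.mono fun x hx => hx.1) ?_
    rw [interior_Icc]; intro x hx
    rw [(hd x hx.1).deriv]; exact d1 x hx
  have m2 : StrictAntiOn (fTV V K c) (Icc p q) := by
    refine strictAntiOn_of_deriv_neg (convex_Icc _ _) (hc.mono fun x hx => hM0.le.trans hx.1) ?_
    rw [interior_Icc]; intro x hx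
    rw [(hd x (hM0.trans hx.1)).deriv]; exact d2 x hx
  have m3 : StrictMonoOn (fTV V K c) (Ici q) := by
    refine strictMonoOn_of_deriv_pos (convex_Ici _) (hc.mono fun x hx => (hM0.trans hpq).le.trans hx) ?_
    rw [interior_Ici]; intro x hx
    rw [(hd x ((hM0.trans hpq).trans hx)).deriv]; exact d3 x hx
  have n1 : u1 ≠ p ∧ u0 ≠ p ∧ u2 ≠ p := by
    refine ⟨?_, ?_, ?_⟩ <;> intro e <;> rw [← e] at hfM <;> linarith
  have n2 : u1 ≠ q ∧ u0 ≠ q ∧ u2 ≠ q := by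
    refine ⟨?_, ?_, ?_⟩ <;> intro e <;> rw [← e] at hfm <;> linarith
  have i1 : ∀ x y, 0 < x → x < y → fTV V K c x = 0 → fTV V K c y = 0 → p < y := by
    intro x y hx hxy ex ey
    by_contra hh; push Not at hh
    have := m1 ⟨hx.le, hxy.le.trans hh⟩ ⟨(hx.trans hxy).le, hh⟩ hxy
    linarith
  have i3 : ∀ x y, x < y → fTV V K c x = 0 → fTV V K c y = 0 → x < q := by
    intro x y hxy ex ey
    by_contra hh; push Not at hh
    have := m3 hh (hh.trans hxy.le) hxy
    linarith
  have i2 : ∀ x y, x < y → fTV V K c x = 0 → fTV V K c y = 0 → p ≤ x → y ≤ q → False := by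
    intro x y hxy ex ey h1 h2
    have := m2 ⟨h1, hxy.le.trans h2⟩ ⟨h1.trans hxy.le, h2⟩ hxy
    linarith
  have p0 := i1 u1 u0 hu1 h10 z1 z0
  have q0 := i3 u0 u2 h02 z0 z2
  have p1 : u1 < p := by
    by_contra hh; push Not at hh
    exact i2 u1 u0 h10 z1 z0 hh q0.le
  have q2 : q < u2 := by
    by_contra hh; push Not at hh
    exact i2 u0 u2 h02 z0 z2 p0.le hh
  refine ⟨fun v hv => ?_, fun v hv => ?_, fun v hv => ?_, fun v hv => ?_, d2 u0 ⟨p0, q0⟩⟩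
  · rw [← z1]; exact m1 ⟨hv.1.le, by linarith [hv.2]⟩ ⟨hu1.le, p1.le⟩ hv.2
  · rcases le_total v p with hl | hl
    · rw [← z1]; exact m1 ⟨hu1.le, p1.le⟩ ⟨by linarith [hv.1], hl⟩ hv.1
    · rw [← z0]; exact m2 ⟨hl, by linarith [hv.2]⟩ ⟨p0.le, q0.le⟩ hv.2
  · rcases le_total v q with hl | hl
    · rw [← z0]; exact m2 ⟨p0.le, q0.le⟩ ⟨by linarith [hv.1], hl⟩ hv.1
    · rw [← z2]; exact m3 hl q2.le hv.2
  · rw [← z2]; exact m3 q2.le (q2.le.trans hv.le) hv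

lemma kinv_cd {κ : ℝ → ℝ} (h : A2 κ) : ContDiffOn ℝ 1 (fun u => κ (1 / u)) (Ioi 0) := by
  refine h.1.comp (contDiffOn_const.div contDiffOn_id fun x hx => ne_of_gt hx) fun x hx => ?_
  exact one_div_pos.2 (show 0 < x from hx)

lemma g1_cd {κ : ℝ → ℝ} {τ : ℝ} (h : A2 κ) (hτ : 0 < τ) : ContDiffOn ℝ 1 (g1TV κ τ) (Ioi 0) := by
  refine contDiffOn_const.div (contDiffOn_const.mul (kinv_cd h)) fun x hx => ?_
  exact (mul_pos hτ (h.2 _ (one_div_pos.2 hx))).ne'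

lemma g2_cd {κ : ℝ → ℝ} {τ : ℝ} (h : A2 κ) (hτ : 0 < τ) : ContDiffOn ℝ 1 (g2TV κ τ) (Ioi 0) := by
  refine contDiffOn_id.div (contDiffOn_const.mul (kinv_cd h)) fun x hx => ?_
  exact (mul_pos (by linarith) (h.2 _ (one_div_pos.2 hx))).ne'

lemma g1_pos {κ : ℝ → ℝ} {τ u : ℝ} (h : A2 κ) (hτ : 0 < τ) (hu : 0 < u) : 0 < g1TV κ τ u :=
  one_div_pos.2 (mul_pos hτ (h.2 _ (one_div_pos.2 hu)))

lemma g2_pos {κ : ℝ → ℝ} {τ u : ℝ} (h : A2 κ) (hτ : 0 < τ) (hu : 0 < u) : 0 < g2TV κ τ u :=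
  div_pos hu (mul_pos (by linarith) (h.2 _ (one_div_pos.2 hu)))

lemma f_cd {V V' V'' : ℝ → ℝ} {UM K c : ℝ} (h : A1 V V' V'' UM) : ContDiffOn ℝ 1 (fTV V K c) (Ioi 0) :=
  (((contDiffOn_const.mul contDiffOn_id).sub
    (cd1 (fun _ hu => h.dV hu) (h.2.1.mono Ioi_subset_Ici_self))).sub contDiffOn_const).div_const K

lemma fd_cd {V V' V'' : ℝ → ℝ} {UM K : ℝ} (h : A1 V V' V'' UM) : ContDiffOn ℝ 1 (fdTV V' K) (Ioi 0) :=
  (contDiffOn_const.sub (cd1 h.2.2.1 h.2.2.2.1)).div_const K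

lemma tv_sol {V V' κ : ℝ → ℝ} {τ K c μ : ℝ} {u w : ℝ → ℝ} :
    IsTVSol V V' κ τ K c μ u w ↔ Sol (fun u => g1TV κ τ u * fTV V K c u)
      (DD (fun u => g2TV κ τ u * fdTV V' K u) (g2TV κ τ) μ) u w := by
  unfold IsTVSol Sol DD hTV
  refine and_congr Iff.rfl (forall_congr' fun z => ?_)
  rw [show g2TV κ τ (u z) * (fdTV V' K (u z) + μ) = 
    g2TV κ τ (u z) * fdTV V' K (u z) + μ * g2TV κ τ (u z) by ring]

lemma DD_neg {d g : ℝ → ℝ} {μ : ℝ} : (fun u => -DD d g μ u) = DD (fun u => -d u) g (-μ) := by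
  ext u; unfold DD; ring

lemma DD_cd {d g : ℝ → ℝ} (dcd : ContDiffOn ℝ 1 d (Ioi 0)) (gcd : ContDiffOn ℝ 1 g (Ioi 0)) (μ : ℝ) :
    ContDiffOn ℝ 1 (DD d g μ) (Ioi 0) := dcd.add (contDiffOn_const.mul gcd)

theorem core {A d g : ℝ → ℝ} {u1 u0 u2 μb μf A0 : ℝ}
    (Acd : ContDiffOn ℝ 1 A (Ioi 0)) (dcd : ContDiffOn ℝ 1 d (Ioi 0)) (gcd : ContDiffOn ℝ 1 g (Ioi 0))
    (gp : ∀ u, 0 < u → 0 < g u) (hu1 : 0 < u1) (h10 : u1 < u0) (h02 : u0 < u2)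
    (hA' : HasDerivAt A A0 u0) (hA0 : A0 < 0)
    (t1 : ∀ v ∈ Ioo 0 u1, A v < 0) (t2 : ∀ v ∈ Ioo u1 u0, 0 < A v)
    (t3 : ∀ v ∈ Ioo u0 u2, A v < 0) (t4 : ∀ v, u2 < v → 0 < A v)
    (a1 : A u1 = 0) (a0 : A u0 = 0) (a2 : A u2 = 0)
    (hμb : ∀ μ : ℝ, (∃ u w, Sol A (DD d g μ) u w ∧ (∀ z, 0 < u z) ∧ HE1 u1 u2 u w) ↔ μ = μb)
    (hμf : ∀ μ : ℝ, (∃ u w, Sol A (DD d g μ) u w ∧ (∀ z, 0 < u z) ∧ HE2 u1 u2 u w) ↔ μ = μf)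
    (hlt : μf < μb) :
    ∃ μp : ℝ, μf < μp ∧ μp < μb ∧
      ∀ μ : ℝ, (∃ u w, Sol A (DD d g μ) u w ∧ (∀ z, 0 < u z) ∧ HO u1 u w) ↔ μ = μp := by
  have hsub : Icc u1 u2 ⊆ Ioi 0 := fun x hx => hu1.trans_le hx.1
  have hAc := Acd.continuousOn.mono hsub
  have hgp : ∀ u ∈ Icc u1 u2, 0 < g u := fun u hu => gp u (hsub hu)
  have LA := lip_of Acd
  have LD : ∀ μ α β, 0 < α → Lip (DD d g μ) α β := fun μ => lip_of (DD_cd dcd gcd μ)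
  have LD' : ∀ μ α β, 0 < α → Lip (DD (fun u => -d u) g (-μ)) α β := fun μ =>
    lip_of (DD_cd dcd.neg gcd (-μ))
  obtain ⟨ub, wb, hsb, -, hb⟩ := (hμb μb).2 rfl
  obtain ⟨uf, wf, hsf, -, hf⟩ := (hμf μf).2 rfl
  obtain ⟨qb, hqb⟩ := he1_graph hsb hb
  obtain ⟨qf, hqf⟩ : ∃ q, ZG A (DD (fun u => -d u) g (-μf)) u1 u2 q := by
    have hr := hsf.reverse
    rw [DD_neg] at hr
    obtain ⟨f1, f2, f3, f4, f5⟩ := hf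
    exact he1_graph hr ⟨f2.comp tendsto_neg_atBot_atTop, f1.comp tendsto_neg_atTop_atBot,
      by simpa using (f4.comp tendsto_neg_atBot_atTop).neg,
      by simpa using (f3.comp tendsto_neg_atTop_atBot).neg, fun z => by linarith [f5 (-z)]⟩
  obtain ⟨μp, hμp, m, hm, qp, qm, hqp, hqm⟩ := graphs_exist h10 h02 hAc (dcd.continuousOn.mono hsub)
    (gcd.continuousOn.mono hsub) hgp t2 t3 hA' a0 hA0 hqb hqf hlt.le
  have hm2 : m < u2 := by
    refine lt_of_le_of_ne hm.2 fun e => ?_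
    rw [e] at hqp hqm
    have e1 : μp = μb := by
      obtain ⟨u, w, h1, h2, h3⟩ := orbit_het (LA u1 u2 hu1) (LD μp u1 u2 hu1) hqp le_rfl le_rfl
        (h10.trans h02) a1 a2
      exact (hμb μp).1 ⟨u, w, h1, fun z => hu1.trans (h2 z).1, h3⟩
    have e2 : μp = μf := by
      obtain ⟨u, w, h1, h2, f1, f2, f3, f4, f5⟩ := orbit_het (LA u1 u2 hu1) (LD' μp u1 u2 hu1) hqm
        le_rfl le_rfl (h10.trans h02) a1 a2
      have hr := h1.reverse
      rw [DD_neg] at hr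
      simp only [neg_neg] at hr
      refine (hμf μp).1 ⟨_, _, hr, fun z => hu1.trans (h2 _).1,
        f2.comp tendsto_neg_atBot_atTop, f1.comp tendsto_neg_atTop_atBot,
        by simpa using (f4.comp tendsto_neg_atBot_atTop).neg,
        by simpa using (f3.comp tendsto_neg_atTop_atBot).neg, fun z => by linarith [f5 (-z)]⟩
    linarith
  have hnb : μp ≠ μb := by
    rintro rfl
    exact absurd (ends_le_eq h10 hAc t2 t3 hm.1 le_rfl hqb.1 hqp.1 hqb.2.1 hqp.2.1 hqp.2.2) (not_le.2 hm2)
  have hnf : μp ≠ μf := by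
    rintro rfl
    exact absurd (ends_le_eq h10 hAc t2 t3 hm.1 le_rfl hqf.1 hqm.1 hqf.2.1 hqm.2.1 hqm.2.2) (not_le.2 hm2)
  refine ⟨μp, lt_of_le_of_ne hμp.1 hnf.symm, lt_of_le_of_ne hμp.2 hnb, fun μ => ⟨?_, ?_⟩⟩
  · rintro ⟨u, w, hs, hpos, hho⟩
    obtain ⟨m', hm', qp', qm', hqp', hqm'⟩ := ho_graph LA (LD μ) hu1 t1 t2 t3 t4 a1 a0 a2 hs hpos hho
    rw [DD_neg] at hqm'
    rcases lt_trichotomy μ μp with hl | hl | hl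
    · have k1 := ends_lt h10 t2 t3 hgp hm'.1 hm.1 hm'.2.le hm.2 hqp'.1 hqp.1 hqp'.2.1 hqp.2.1 hqp.2.2 hl
      have k2 := ends_lt h10 t2 t3 hgp hm.1 hm'.1 hm.2 hm'.2.le hqm.1 hqm'.1 hqm.2.1 hqm'.2.1 hqm'.2.2
        (neg_lt_neg hl)
      exact absurd k1 (not_lt.2 k2.le)
    · exact hl
    · have k1 := ends_lt h10 t2 t3 hgp hm'.1 hm.1 hm'.2.le hm.2 hqm'.1 hqm.1 hqm'.2.1 hqm.2.1 hqm.2.2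
        (neg_lt_neg hl)
      have k2 := ends_lt h10 t2 t3 hgp hm.1 hm'.1 hm.2 hm'.2.le hqp.1 hqp'.1 hqp.2.1 hqp'.2.1 hqp'.2.2 hl
      exact absurd k1 (not_lt.2 k2.le)
  · rintro rfl
    rw [← DD_neg] at hqm
    obtain ⟨u, w, h1, h2, h3⟩ := orbit_ho (LA u1 u2 hu1) (LD μ u1 u2 hu1) hqp hqm le_rfl hm.2
      (h10.trans hm.1) a1 (t3 m ⟨hm.1, hm2⟩).ne
    exact ⟨u, w, h1, fun z => hu1.trans (h2 z).1, h3⟩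

theorem main_aux
    (V V' V'' κ : ℝ → ℝ) (τ UM K c : ℝ) (uMx umx : ℝ → ℝ)
    (hA1 : A1 V V' V'' UM) (hA2 : A2 κ) (hτ : 0 < τ)
    (huMx : UMaxHyp V' UM uMx) (humx : UMinHyp V' UM umx)
    (hD1 : (K, c) ∈ D1 V V' UM uMx umx)
    (u1 u0 u2 μb μf : ℝ) (hz : ZerosD1 V K c u1 u0 u2)
    (hμb : ∀ μ : ℝ, HasHE1 V V' κ τ K c μ u1 u2 ↔ μ = μb)
    (hμf : ∀ μ : ℝ, HasHE2 V V' κ τ K c μ u1 u2 ↔ μ = μf)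
    (hlt : μf < μb) :
    ∃ μp : ℝ, μf < μp ∧ μp < μb ∧ ∀ μ : ℝ, HasHO V V' κ τ K c μ u1 ↔ μ = μp := by
  obtain ⟨s1, s2, s3, s4, sd⟩ := f_signs hA1 huMx humx hD1 hz
  obtain ⟨hu1, h10, h02, z1, z0, z2, -⟩ := hz
  have hu0 : 0 < u0 := hu1.trans h10
  have hu2 : 0 < u2 := hu0.trans h02
  have Acd : ContDiffOn ℝ 1 (fun u => g1TV κ τ u * fTV V K c u) (Ioi 0) :=
    (g1_cd hA2 hτ).mul (f_cd hA1)
  have dcd : ContDiffOn ℝ 1 (fun u => g2TV κ τ u * fdTV V' K u) (Ioi 0) :=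
    (g2_cd hA2 hτ).mul (fd_cd hA1)
  have gcd := g2_cd hA2 hτ
  have gp : ∀ u, 0 < u → 0 < g2TV κ τ u := fun u hu => g2_pos hA2 hτ hu
  have hA' : HasDerivAt (fun u => g1TV κ τ u * fTV V K c u) (g1TV κ τ u0 * fdTV V' K u0) u0 := by
    have e1 : HasDerivAt (g1TV κ τ) (deriv (g1TV κ τ) u0) u0 :=
      (((g1_cd hA2 hτ).differentiableOn one_ne_zero).differentiableAt (Ioi_mem_nhds hu0)).hasDerivAt
    have e2 : HasDerivAt (fTV V K c) (fdTV V' K u0) u0 :=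
      (((((hasDerivAt_id u0).const_mul K).sub (hA1.dV hu0)).sub_const c).div_const K).congr_deriv
        (by simp [fdTV])
    exact (e1.mul e2).congr_deriv (by rw [z0]; ring)
  have hA0 : g1TV κ τ u0 * fdTV V' K u0 < 0 := mul_neg_of_pos_of_neg (g1_pos hA2 hτ hu0) sd
  have t1 : ∀ v ∈ Ioo 0 u1, g1TV κ τ v * fTV V K c v < 0 := fun v hv =>
    mul_neg_of_pos_of_neg (g1_pos hA2 hτ hv.1) (s1 v hv)
  have t2 : ∀ v ∈ Ioo u1 u0, 0 < g1TV κ τ v * fTV V K c v := fun v hv =>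
    mul_pos (g1_pos hA2 hτ (hu1.trans hv.1)) (s2 v hv)
  have t3 : ∀ v ∈ Ioo u0 u2, g1TV κ τ v * fTV V K c v < 0 := fun v hv =>
    mul_neg_of_pos_of_neg (g1_pos hA2 hτ (hu0.trans hv.1)) (s3 v hv)
  have t4 : ∀ v, u2 < v → 0 < g1TV κ τ v * fTV V K c v := fun v hv =>
    mul_pos (g1_pos hA2 hτ (hu2.trans hv)) (s4 v hv)
  have a1 : g1TV κ τ u1 * fTV V K c u1 = 0 := by rw [z1, mul_zero]
  have a0 : g1TV κ τ u0 * fTV V K c u0 = 0 := by rw [z0, mul_zero]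
  have a2 : g1TV κ τ u2 * fTV V K c u2 = 0 := by rw [z2, mul_zero]
  unfold HasHE1 at hμb
  unfold HasHE2 at hμf
  unfold HasHO
  simp only [tv_sol] at hμb hμf ⊢
  exact core Acd dcd gcd gp hu1 h10 h02 hA' hA0 t1 t2 t3 t4 a1 a0 a2 hμb hμf hlt

theorem stmt4
    (V V' V'' κ : ℝ → ℝ) (τ UM K c K₁ : ℝ) (uMx umx : ℝ → ℝ)
    (hA1 : A1 V V' V'' UM) (hA2 : A2 κ) (hτ : 0 < τ) (hK : K ≠ 0)
    (huMx : UMaxHyp V' UM uMx) (humx : UMinHyp V' UM umx)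
    (hK1 : K1Hyp V V' UM umx K₁)
    (hC : CondC V' κ UM K₁ K)
    (hD1 : (K, c) ∈ D1 V V' UM uMx umx)
    (u1 u0 u2 μb μf : ℝ) (hz : ZerosD1 V K c u1 u0 u2)
    (hμb : ∀ μ : ℝ, HasHE1 V V' κ τ K c μ u1 u2 ↔ μ = μb)
    (hμf : ∀ μ : ℝ, HasHE2 V V' κ τ K c μ u1 u2 ↔ μ = μf)
    (hlt : μf < μb) :
    ∃ μp : ℝ, μf < μp ∧ μp < μb ∧ ∀ μ : ℝ, HasHO V V' κ τ K c μ u1 ↔ μ = μp := by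
  exact main_aux V V' V'' κ τ UM K c uMx umx hA1 hA2 hτ huMx humx hD1 u1 u0 u2 μb μf hz hμb hμf hlt

end TrafficTW
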